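/- arXiv:1709.00464 — 5 statements merged into one kernel-verified Lean document; each statement's English description precedes it below -/
import Mathlib

section
/- Let N⁺ be a finite neighborhood containing two non-collinear movement vectors (i.e., there exist u, v ∈ N⁺ that are not collinear as vectors of ℤ²), and let c be a finite configuration. Then there exists t₀ ∈ ℕ such that F^{t₀}(c) is stable. -/
open Finset

/-- Vertices of the two-dimensional grid. -/
abbrev Vertex := ℤ × ℤ

/-- A configuration assigns a number of grains to each vertex. -/
abbrev Config := Vertex → ℕ

/-- Parallel abelian sandpile dynamics with uniform neighborhood `N`:
`F(c)(v) = c(v) - p·𝟙[c(v) ≥ p] + |{u | v - u ∈ N ∧ c(u) ≥ p}|` with `p = |N|`.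
(The vertices `u` with `v - u ∈ N` are exactly the `v - d` for `d ∈ N`.) -/
def sandF (N : Finset Vertex) (c : Config) : Config := fun v =>
  (c v - if N.card ≤ c v then N.card else 0)
    + (N.filter (fun d => N.card ≤ c (v - d))).card

/-- A configuration is stable when every vertex has fewer than `p = |N|` grains. -/
def Stable (N : Finset Vertex) (c : Config) : Prop := ∀ v, c v < N.card

/-- The set of unstable vertices of a configuration. -/
def Act (N : Finset Vertex) (c : Config) : Set Vertex := {v | N.card ≤ c v}

/-- A configuration is finite when only finitely many vertices carry grains. -/
def FiniteConf (c : Config) : Prop := {v | 0 < c v}.Finite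

/-- A configuration has size `n × m` (positioned at the origin). -/
def HasSize (n m : ℕ) (c : Config) : Prop :=
  ∀ v : Vertex, ¬(0 ≤ v.1 ∧ v.1 < (n : ℤ) ∧ 0 ≤ v.2 ∧ v.2 < (m : ℤ)) → c v = 0

/-- A vector of `E_n`: entries in `{0,1}`, supported on indices `< n`,
with exactly one entry equal to `1`. -/
def IsUnitVec (n : ℕ) (e : ℕ → ℕ) : Prop :=
  (∀ i, e i ≤ 1) ∧ (∀ i, n ≤ i → e i = 0) ∧ (∃! i, e i = 1)

/-- Positioning of a vector on the north border: `N(ē)(x,y) = ē(x)` if `y = 0`. -/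
def confN (n : ℕ) (e : ℕ → ℕ) : Config := fun v =>
  if v.2 = 0 ∧ 0 ≤ v.1 ∧ v.1 < (n : ℤ) then e v.1.toNat else 0

/-- Positioning of a vector on the south border: `S(ē)(x,y) = ē(x)` if `y = n-1`. -/
def confS (n : ℕ) (e : ℕ → ℕ) : Config := fun v =>
  if v.2 = (n : ℤ) - 1 ∧ 0 ≤ v.1 ∧ v.1 < (n : ℤ) then e v.1.toNat else 0

/-- Positioning of a vector on the west border: `W(ē)(x,y) = ē(y)` if `x = 0`. -/
def confW (n : ℕ) (e : ℕ → ℕ) : Config := fun v =>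
  if v.1 = 0 ∧ 0 ≤ v.2 ∧ v.2 < (n : ℤ) then e v.2.toNat else 0

/-- Positioning of a vector on the east border: `E(ē)(x,y) = ē(y)` if `x = n-1`. -/
def confE (n : ℕ) (e : ℕ → ℕ) : Config := fun v =>
  if v.1 = (n : ℤ) - 1 ∧ 0 ≤ v.2 ∧ v.2 < (n : ℤ) then e v.2.toNat else 0

/-- `c` is a transporter from west to east with vectors `w, e`. -/
def TransporterWE (N : Finset Vertex) (n : ℕ) (c : Config) (w e : ℕ → ℕ) : Prop :=
  ∃ t : ℕ, Act N ((sandF N)^[t] (c + confW n w)) = {v : Vertex | confE n e v = 1}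

/-- `c` is a transporter from north to south with vectors `nv, s`. -/
def TransporterNS (N : Finset Vertex) (n : ℕ) (c : Config) (nv s : ℕ → ℕ) : Prop :=
  ∃ t : ℕ, Act N ((sandF N)^[t] (c + confN n nv)) = {v : Vertex | confS n s v = 1}

/-- `c` has west vector `w` isolated to the south. -/
def IsolatedWS (N : Finset Vertex) (n : ℕ) (c : Config) (w : ℕ → ℕ) : Prop :=
  ∀ t : ℕ, ∀ v ∈ Act N ((sandF N)^[t] (c + confW n w)), v.2 ≠ (n : ℤ) - 1

/-- `c` has north vector `nv` isolated to the east. -/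
def IsolatedNE (N : Finset Vertex) (n : ℕ) (c : Config) (nv : ℕ → ℕ) : Prop :=
  ∀ t : ℕ, ∀ v ∈ Act N ((sandF N)^[t] (c + confN n nv)), v.1 ≠ (n : ℤ) - 1

/-- `c` is a crossing configuration of size `n × n` with vectors `nv, e, s, w ∈ E_n`. -/
def CrossingConfig (N : Finset Vertex) (n : ℕ) (c : Config)
    (nv e s w : ℕ → ℕ) : Prop :=
  IsUnitVec n nv ∧ IsUnitVec n e ∧ IsUnitVec n s ∧ IsUnitVec n w ∧
  Stable N c ∧ HasSize n n c ∧
  TransporterWE N n c w e ∧ IsolatedWS N n c w ∧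
  TransporterNS N n c nv s ∧ IsolatedNE N n c nv

/-- A neighborhood can perform crossing when some crossing configuration exists. -/
def CanCross (N : Finset Vertex) : Prop :=
  ∃ (n : ℕ) (c : Config) (nv e s w : ℕ → ℕ), CrossingConfig N n c nv e s w

/-- The neighborhood of a shape `s ⊆ ℝ²` with scaling ratio `r`. -/
def shapeNbhd (s : Set (ℝ × ℝ)) (r : ℝ) : Set Vertex :=
  {v : Vertex | (((v.1 : ℝ) / r, (v.2 : ℝ) / r) : ℝ × ℝ) ∈ s} \ {((0 : ℤ), (0 : ℤ))}

/-- A set `s ⊆ ℝ²` is non-flat when every point of `s` is a vertex of a triangle of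
strictly positive area (three non-collinear points) entirely contained in `s`. -/
def NonFlat (s : Set (ℝ × ℝ)) : Prop :=
  ∀ x ∈ s, ∃ b c : ℝ × ℝ, ¬ Collinear ℝ ({x, b, c} : Set (ℝ × ℝ)) ∧
    convexHull ℝ ({x, b, c} : Set (ℝ × ℝ)) ⊆ s

/-- The total of `f` over the grains of `c`. -/
noncomputable def grainSum (c : Config) (f : Vertex → ℤ) : ℤ := ∑ᶠ v, (c v : ℤ) * f v

lemma finite_support_of_finiteConf {c : Config} (hc : FiniteConf c) (f : Vertex → ℤ) :
    (Function.support fun v => (c v : ℤ) * f v).Finite := by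
  refine hc.subset fun v hv => ?_
  simp only [Function.mem_support, ne_eq, mul_eq_zero, not_or, Nat.cast_eq_zero] at hv
  exact Nat.pos_of_ne_zero hv.1

lemma grainSum_eq_sum {c : Config} (hc : FiniteConf c) (f : Vertex → ℤ) :
    grainSum c f = ∑ v ∈ hc.toFinset, (c v : ℤ) * f v := by
  refine finsum_eq_sum_of_support_subset _ fun v hv => ?_
  simp only [Function.mem_support, ne_eq, mul_eq_zero, not_or, Nat.cast_eq_zero] at hv
  exact (Set.Finite.mem_toFinset hc).2 (Nat.pos_of_ne_zero hv.1)

lemma sandF_pos_of_stable {N : Finset Vertex} {c : Config} {v : Vertex}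
    (hv : 0 < c v) (hs : ¬ N.card ≤ c v) : 0 < sandF N c v := by
  simp only [sandF, hs, if_false]
  omega

lemma sandF_add_pos_of_unstable {N : Finset Vertex} {c : Config} {v d : Vertex}
    (hv : N.card ≤ c v) (hd : d ∈ N) : 0 < sandF N c (v + d) := by
  have : 0 < (N.filter (fun e => N.card ≤ c (v + d - e))).card :=
    Finset.card_pos.2 ⟨d, by simp [hd, hv]⟩
  simp only [sandF]
  omega

lemma exists_pos_of_sandF_pos {N : Finset Vertex} (hN : N.Nonempty) {c : Config} {v : Vertex}
    (hv : 0 < sandF N c v) : 0 < c v ∨ ∃ d ∈ N, 0 < c (v - d) := by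
  by_contra! h
  obtain ⟨h1, h2⟩ := h
  have hp := hN.card_pos
  have : N.filter (fun d => N.card ≤ c (v - d)) = ∅ := by
    refine Finset.filter_eq_empty_iff.2 fun d hd => ?_
    have := h2 d hd
    omega
  simp only [sandF, this, Finset.card_empty] at hv
  omega

lemma FiniteConf.sandF {N : Finset Vertex} (hN : N.Nonempty) {c : Config}
    (hc : FiniteConf c) : FiniteConf (sandF N c) := by
  refine (hc.union (hc.image2 (· + ·) N.finite_toSet)).subset fun v hv => ?_
  rcases exists_pos_of_sandF_pos hN hv with h | ⟨d, hd, h⟩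
  · exact Or.inl h
  · exact Or.inr ⟨v - d, h, d, hd, by simp⟩

lemma FiniteConf.finite_unstable {N : Finset Vertex} (hN : N.Nonempty) {c : Config}
    (hc : FiniteConf c) : {v | N.card ≤ c v}.Finite :=
  hc.subset fun _ hv => lt_of_lt_of_le hN.card_pos hv

lemma finsum_ite_unstable {N : Finset Vertex} (hN : N.Nonempty) {c : Config}
    (hc : FiniteConf c) (f : Vertex → ℤ) :
    ∑ᶠ v, (if N.card ≤ c v then f v else 0) = ∑ v ∈ (hc.finite_unstable hN).toFinset, f v := by
  rw [finsum_eq_sum_of_support_subset (s := (hc.finite_unstable hN).toFinset)]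
  · exact Finset.sum_congr rfl fun v hv => if_pos (by simpa using hv)
  · intro v hv
    simp only [Function.mem_support, ne_eq, ite_eq_right_iff, Classical.not_imp] at hv
    simpa using hv.1

/-- Each unstable vertex `v` changes the total of `f` by `∑ d ∈ N, (f (v + d) - f v)`. -/
lemma grainSum_sandF {N : Finset Vertex} (hN : N.Nonempty) {c : Config}
    (hc : FiniteConf c) (f : Vertex → ℤ) :
    grainSum (sandF N c) f = grainSum c f +
      ∑ v ∈ (hc.finite_unstable hN).toFinset, ∑ d ∈ N, (f (v + d) - f v) := by
  have hfin : ∀ g : Vertex → ℤ,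
      (Function.support fun v => if N.card ≤ c v then g v else 0).Finite := fun g =>
    (hc.finite_unstable hN).subset fun v hv => by
      simp only [Function.mem_support, ne_eq, ite_eq_right_iff, Classical.not_imp] at hv
      exact hv.1
  have hfin_shift : ∀ d ∈ N,
      (Function.support fun v => if N.card ≤ c (v - d) then f v else 0).Finite := fun d _ =>
    ((hc.finite_unstable hN).preimage (sub_left_injective (b := d)).injOn).subset fun v hv => by
      simp only [Function.mem_support, ne_eq, ite_eq_right_iff, Classical.not_imp] at hv
      exact hv.1
  have hstep : ∀ v, (sandF N c v : ℤ) * f v =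
      ((c v : ℤ) * f v + ∑ d ∈ N, if N.card ≤ c (v - d) then f v else 0) -
        if N.card ≤ c v then (N.card : ℤ) * f v else 0 := by
    intro v
    have hcard : ((N.filter (fun d => N.card ≤ c (v - d))).card : ℤ) * f v =
        ∑ d ∈ N, if N.card ≤ c (v - d) then f v else 0 := by
      rw [← Finset.sum_filter, Finset.sum_const, nsmul_eq_mul]
    rw [← hcard]
    simp only [sandF]
    split_ifs with h
    · push_cast [Nat.cast_sub h]
      ring
    · push_cast [Nat.sub_zero]
      ring
  have hsum_fin : (Function.support fun v =>
      ∑ d ∈ N, if N.card ≤ c (v - d) then f v else 0).Finite := by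
    refine (N.finite_toSet.biUnion hfin_shift).subset fun v hv => ?_
    obtain ⟨d, hd, h⟩ := Finset.exists_ne_zero_of_sum_ne_zero hv
    exact Set.mem_biUnion hd h
  have hshift : ∀ d ∈ N, ∑ᶠ v, (if N.card ≤ c (v - d) then f v else 0) =
      ∑ v ∈ (hc.finite_unstable hN).toFinset, f (v + d) := by
    intro d _
    rw [← finsum_ite_unstable hN hc (fun v => f (v + d)),
      ← finsum_comp_equiv (Equiv.addRight d)]
    simp
  have hcf := finite_support_of_finiteConf hc f
  unfold grainSum
  rw [finsum_congr hstep, finsum_sub_distrib ((hcf.union hsum_fin).subset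
      (Function.support_add _ _)) (hfin _), finsum_add_distrib hcf hsum_fin,
    finsum_sum_comm _ _ hfin_shift, Finset.sum_congr rfl hshift, finsum_ite_unstable hN hc,
    Finset.sum_comm]
  simp only [Finset.sum_sub_distrib, Finset.sum_const, nsmul_eq_mul]
  ring

lemma iterate_sandF_finiteConf {N : Finset Vertex} (hN : N.Nonempty) {c : Config}
    (hc : FiniteConf c) (t : ℕ) : FiniteConf ((sandF N)^[t] c) := by
  induction t with
  | zero => exact hc
  | succ t ih =>
    rw [Function.iterate_succ_apply']
    exact ih.sandF hN

lemma grainSum_one_iterate_sandF {N : Finset Vertex} (hN : N.Nonempty) {c : Config}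
    (hc : FiniteConf c) (t : ℕ) :
    grainSum ((sandF N)^[t] c) (fun _ => 1) = grainSum c (fun _ => 1) := by
  induction t with
  | zero => rfl
  | succ t ih =>
    rw [Function.iterate_succ_apply',
      grainSum_sandF hN (iterate_sandF_finiteConf hN hc t), ih]
    simp

/-- Some grain of `c` lies in the strip `a ≤ φ < b`. -/
def StripOccupied (φ : Vertex →+ ℤ) (c : Config) (a b : ℤ) : Prop :=
  ∃ v, 0 < c v ∧ a ≤ φ v ∧ φ v < b

/-- A strip that is at least twice as wide as the largest jump never gets emptied, provided that
firing sends grains in both directions. -/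
lemma StripOccupied.sandF {N : Finset Vertex} {φ : Vertex →+ ℤ} {B : ℤ}
    (hB : ∀ d ∈ N, |φ d| ≤ B) (hpos : ∃ d ∈ N, 0 < φ d) (hneg : ∃ d ∈ N, φ d < 0)
    {c : Config} {a : ℤ} (h : StripOccupied φ c a (a + 2 * B)) :
    StripOccupied φ (sandF N c) a (a + 2 * B) := by
  obtain ⟨v, hv, ha, hb⟩ := h
  by_cases hs : N.card ≤ c v
  · by_cases hmid : φ v < a + B
    · obtain ⟨d, hd, hd0⟩ := hpos
      have := (abs_le.1 (hB d hd)).2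
      exact ⟨v + d, sandF_add_pos_of_unstable hs hd, by rw [map_add]; omega,
        by rw [map_add]; omega⟩
    · obtain ⟨d, hd, hd0⟩ := hneg
      have := (abs_le.1 (hB d hd)).1
      exact ⟨v + d, sandF_add_pos_of_unstable hs hd, by rw [map_add]; omega,
        by rw [map_add]; omega⟩
  · exact ⟨v, sandF_pos_of_stable hv hs, ha, hb⟩

/-- Grains which go past a strip leave a grain in it forever. -/
lemma stripOccupied_iterate_sandF {N : Finset Vertex} (hN : N.Nonempty) {φ : Vertex →+ ℤ} {B : ℤ}
    (hB : ∀ d ∈ N, |φ d| ≤ B) (hpos : ∃ d ∈ N, 0 < φ d) (hneg : ∃ d ∈ N, φ d < 0)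
    {c : Config} {a : ℤ} (hc : ∀ v, 0 < c v → φ v < a) (t : ℕ) :
    ∀ v, 0 < (sandF N)^[t] c v → a + 2 * B ≤ φ v →
      StripOccupied φ ((sandF N)^[t] c) a (a + 2 * B) := by
  have hB0 : 0 < B := by
    obtain ⟨d, hd, hd0⟩ := hpos
    exact hd0.trans_le ((le_abs_self _).trans (hB d hd))
  induction t with
  | zero =>
    intro v hv hav
    have := hc v hv
    omega
  | succ t ih =>
    rw [Function.iterate_succ_apply']
    intro v hv hav
    refine StripOccupied.sandF hB hpos hneg ?_
    rcases exists_pos_of_sandF_pos hN hv with h | ⟨d, hd, h⟩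
    · exact ih v h hav
    · by_cases hav' : a + 2 * B ≤ φ (v - d)
      · exact ih _ h hav'
      · refine ⟨v - d, h, ?_, by omega⟩
        have := (abs_le.1 (hB d hd)).2
        rw [map_sub]
        omega

lemma card_le_grainSum_one {c : Config} (hc : FiniteConf c) (s : Finset Vertex)
    (hs : ∀ v ∈ s, 0 < c v) : (s.card : ℤ) ≤ grainSum c (fun _ => 1) := by
  rw [grainSum_eq_sum hc]
  calc (s.card : ℤ) ≤ ∑ v ∈ s, (c v : ℤ) * 1 := by
        rw [Finset.card_eq_sum_ones, Nat.cast_sum]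
        exact Finset.sum_le_sum fun v hv => by
          have := hs v hv
          push_cast
          omega
    _ ≤ _ := Finset.sum_le_sum_of_subset_of_nonneg
        (fun v hv => (Set.Finite.mem_toFinset hc).2 (hs v hv)) (fun _ _ _ => by positivity)

/-- Grains stay in a half-plane whose boundary is transverse to directions in which firing moves
grains both ways. -/
lemma exists_upper_bound_iterate_sandF {N : Finset Vertex} (hN : N.Nonempty) {φ : Vertex →+ ℤ}
    (hpos : ∃ d ∈ N, 0 < φ d) (hneg : ∃ d ∈ N, φ d < 0) {c : Config} (hc : FiniteConf c) :
    ∃ M : ℤ, ∀ t v, 0 < (sandF N)^[t] c v → φ v < M := by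
  obtain ⟨B, hB⟩ : ∃ B : ℤ, ∀ d ∈ N, |φ d| ≤ B :=
    ⟨∑ d ∈ N, |φ d|, fun d hd =>
      Finset.single_le_sum (f := fun d => |φ d|) (fun _ _ => abs_nonneg _) hd⟩
  have hB0 : 0 < B := by
    obtain ⟨d, hd, hd0⟩ := hpos
    exact hd0.trans_le ((le_abs_self _).trans (hB d hd))
  obtain ⟨R, hR⟩ : ∃ R : ℤ, ∀ v, 0 < c v → φ v < R := by
    obtain ⟨R, hR⟩ := (hc.image φ).bddAbove
    exact ⟨R + 1, fun v hv => Int.lt_add_one_of_le (hR ⟨v, hv, rfl⟩)⟩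
  obtain ⟨G, hG⟩ : ∃ G : ℕ, grainSum c (fun _ => 1) < G :=
    ⟨_, Int.lt_add_one_of_le (Int.self_le_toNat (grainSum c fun _ => 1)) |>.trans_eq
      (Nat.cast_succ _).symm⟩
  refine ⟨R + 2 * B * G, fun t v hv => ?_⟩
  by_contra! hlt
  have hocc : ∀ k : Fin G, StripOccupied φ ((sandF N)^[t] c) (R + 2 * B * (k : ℕ))
      (R + 2 * B * (k : ℕ) + 2 * B) := by
    intro k
    refine stripOccupied_iterate_sandF hN hB hpos hneg (fun w hw => ?_) t v hv ?_
    · have := hR w hw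
      have : 0 ≤ 2 * B * ((k : ℕ) : ℤ) := by positivity
      omega
    · have : (((k : ℕ) : ℤ) + 1) ≤ G := by exact_mod_cast k.2
      nlinarith
  choose w hw hw1 hw2 using hocc
  have hinj : Function.Injective w := by
    have hle : ∀ i j : Fin G, w i = w j → (i : ℕ) ≤ j := by
      intro i j hij
      have h1 := hw1 i
      have h2 := hw2 j
      rw [hij] at h1
      have : 2 * B * ((i : ℕ) : ℤ) < 2 * B * (((j : ℕ) : ℤ) + 1) := by linarith
      have := lt_of_mul_lt_mul_left this (by positivity)
      omega
    exact fun i j hij => Fin.ext (le_antisymm (hle i j hij) (hle j i hij.symm))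
  have := card_le_grainSum_one (iterate_sandF_finiteConf hN hc t) (Finset.univ.image w)
    (by simpa using hw)
  rw [grainSum_one_iterate_sandF hN hc, Finset.card_image_of_injective _ hinj,
    Finset.card_univ, Fintype.card_fin] at this
  omega

/-- When the movement vectors are balanced with respect to `φ`, every firing increases the second
moment along `φ` by the same amount. -/
lemma grainSum_sq_sandF {N : Finset Vertex} (hN : N.Nonempty) {φ : Vertex →+ ℤ}
    (hφ : ∑ d ∈ N, φ d = 0) {c : Config} (hc : FiniteConf c) :
    grainSum (sandF N c) (fun v => φ v ^ 2) = grainSum c (fun v => φ v ^ 2) +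
      (hc.finite_unstable hN).toFinset.card * ∑ d ∈ N, φ d ^ 2 := by
  rw [grainSum_sandF hN hc, ← nsmul_eq_mul, ← Finset.sum_const]
  congr 1
  refine Finset.sum_congr rfl fun v _ => ?_
  have : ∀ d, φ (v + d) ^ 2 - φ v ^ 2 = 2 * φ v * φ d + φ d ^ 2 := fun d => by
    rw [map_add]
    ring
  simp only [this, Finset.sum_add_distrib, ← Finset.mul_sum, hφ, mul_zero, zero_add]

/-- A finite configuration stabilizes as soon as the movement vectors are balanced with respect to
a linear form which does not vanish on all of them. -/
theorem exists_stable_of_balanced {N : Finset Vertex} {φ : Vertex →+ ℤ}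
    (hφ : ∑ d ∈ N, φ d = 0) (hne : ∃ d ∈ N, φ d ≠ 0) {c : Config} (hc : FiniteConf c) :
    ∃ t, Stable N ((sandF N)^[t] c) := by
  have hN : N.Nonempty := hne.imp fun _ h => h.1
  have hpos : ∃ d ∈ N, 0 < φ d := Finset.exists_pos_of_sum_zero_of_exists_nonzero _ hφ hne
  have hneg : ∃ d ∈ N, φ d < 0 := by
    simpa using Finset.exists_pos_of_sum_zero_of_exists_nonzero (s := N) (fun d => -φ d)
      (by simpa using hφ) (by simpa using hne)
  obtain ⟨M₁, hM₁⟩ := exists_upper_bound_iterate_sandF hN hpos hneg hc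
  obtain ⟨M₂, hM₂⟩ := exists_upper_bound_iterate_sandF (φ := -φ) hN
    (by simpa using hneg) (by simpa using hpos) hc
  have hbound : ∀ t, grainSum ((sandF N)^[t] c) (fun v => φ v ^ 2) ≤
      (M₁ ^ 2 + M₂ ^ 2) * grainSum c (fun _ => 1) := by
    intro t
    have hct := iterate_sandF_finiteConf hN hc t
    rw [← grainSum_one_iterate_sandF hN hc t, grainSum_eq_sum hct, grainSum_eq_sum hct,
      Finset.mul_sum]
    refine Finset.sum_le_sum fun v hv => ?_
    have hv : 0 < (sandF N)^[t] c v := (Set.Finite.mem_toFinset hct).1 hv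
    have h1 := hM₁ t v hv
    have h2 := hM₂ t v hv
    rw [AddMonoidHom.neg_apply] at h2
    have hsq : φ v ^ 2 ≤ M₁ ^ 2 + M₂ ^ 2 := by
      rcases le_total 0 (φ v) with h | h <;> nlinarith
    rw [mul_one, mul_comm]
    exact mul_le_mul_of_nonneg_right hsq (by positivity)
  by_contra! hunst
  have hgrow : ∀ t : ℕ, (t : ℤ) ≤ grainSum ((sandF N)^[t] c) (fun v => φ v ^ 2) := by
    intro t
    induction t with
    | zero =>
      rw [grainSum_eq_sum (iterate_sandF_finiteConf hN hc 0)]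
      exact Finset.sum_nonneg fun _ _ => by positivity
    | succ t ih =>
      have hct := iterate_sandF_finiteConf hN hc t
      rw [Function.iterate_succ_apply', grainSum_sq_sandF hN hφ hct]
      have hcard : 0 < (hct.finite_unstable hN).toFinset.card := by
        have := hunst t
        simp only [Stable, not_forall, not_lt] at this
        obtain ⟨v, hv⟩ := this
        exact Finset.card_pos.2 ⟨v, by simpa using hv⟩
      have hsum : 0 < ∑ d ∈ N, φ d ^ 2 := by
        obtain ⟨d, hd, hd0⟩ := hne
        exact Finset.sum_pos' (fun _ _ => sq_nonneg _) ⟨d, hd, by positivity⟩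
      have : (0 : ℤ) < (hct.finite_unstable hN).toFinset.card * ∑ d ∈ N, φ d ^ 2 :=
        mul_pos (by exact_mod_cast hcard) hsum
      push_cast
      omega
  have h1 := hgrow (((M₁ ^ 2 + M₂ ^ 2) * grainSum c (fun _ => 1)).toNat + 1)
  have h2 := hbound (((M₁ ^ 2 + M₂ ^ 2) * grainSum c (fun _ => 1)).toNat + 1)
  have h3 := Int.self_le_toNat ((M₁ ^ 2 + M₂ ^ 2) * grainSum c (fun _ => 1))
  push_cast at h1
  omega

/-- The linear form `(x, y) ↦ a * x + b * y`. -/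
def linearForm (a b : ℤ) : Vertex →+ ℤ where
  toFun w := a * w.1 + b * w.2
  map_zero' := by simp
  map_add' x y := by
    simp only [Prod.fst_add, Prod.snd_add]
    ring

@[simp]
lemma linearForm_apply (a b : ℤ) (w : Vertex) : linearForm a b w = a * w.1 + b * w.2 := rfl

lemma sum_linearForm (N : Finset Vertex) (a b : ℤ) :
    ∑ d ∈ N, linearForm a b d = a * ∑ d ∈ N, d.1 + b * ∑ d ∈ N, d.2 := by
  simp only [linearForm_apply, Finset.sum_add_distrib, Finset.mul_sum]

lemma exists_balanced_form {N : Finset Vertex} {u v : Vertex} (hu : u ∈ N) (hv : v ∈ N)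
    (hcol : u.1 * v.2 ≠ u.2 * v.1) :
    ∃ φ : Vertex →+ ℤ, ∑ d ∈ N, φ d = 0 ∧ ∃ d ∈ N, φ d ≠ 0 := by
  have hindep : ∀ a b : ℤ, linearForm a b u = 0 → linearForm a b v = 0 → a = 0 ∧ b = 0 := by
    intro a b h1 h2
    rw [linearForm_apply] at h1 h2
    have hdet : u.1 * v.2 - u.2 * v.1 ≠ 0 := sub_ne_zero.2 hcol
    constructor
    · exact (mul_eq_zero.1 (by linear_combination v.2 * h1 - u.2 * h2 :
        a * (u.1 * v.2 - u.2 * v.1) = 0)).resolve_right hdet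
    · exact (mul_eq_zero.1 (by linear_combination u.1 * h2 - v.1 * h1 :
        b * (u.1 * v.2 - u.2 * v.1) = 0)).resolve_right hdet
  obtain ⟨a, b, hsum, hab⟩ : ∃ a b : ℤ, ∑ d ∈ N, linearForm a b d = 0 ∧ ¬ (a = 0 ∧ b = 0) := by
    by_cases h : ∑ d ∈ N, d.2 = 0 ∧ ∑ d ∈ N, d.1 = 0
    · exact ⟨1, 0, by rw [sum_linearForm, h.1, h.2]; simp, by simp⟩
    · refine ⟨∑ d ∈ N, d.2, -∑ d ∈ N, d.1, ?_, by rwa [neg_eq_zero]⟩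
      rw [sum_linearForm]
      ring
  refine ⟨linearForm a b, hsum, ?_⟩
  by_contra! h
  exact hab (hindep a b (h u hu) (h v hv))

/-- with two non-collinear movement vectors, any finite configuration
stabilizes after finitely many parallel steps. -/
theorem stmt_1 (N : Finset Vertex) (h0 : ((0 : ℤ), (0 : ℤ)) ∉ N)
    (u v : Vertex) (hu : u ∈ N) (hv : v ∈ N) (hcol : u.1 * v.2 ≠ u.2 * v.1)
    (c : Config) (hc : FiniteConf c) :
    ∃ t₀ : ℕ, Stable N ((sandF N)^[t₀] c) := by
  obtain ⟨φ, hφ, hne⟩ := exists_balanced_form hu hv hcol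
  exact exists_stable_of_balanced hφ hne hc
end

section
/- For the abelian sandpile model on ℤ² with a finite uniform neighborhood N⁺: if there exists a crossing configuration, then there exists a crossing configuration c' (for some size n and some vectors n̄,ē,s̄,w̄ ∈ E_n) whose two firing graphs are vertex-disjoint, i.e., the set V_we of vertices fired during the evolution from c' + W(w̄) and the set V_ns of vertices fired during the evolution from c' + N(n̄) satisfy V_we ∩ V_ns = ∅. -/
open Finset

/-- The number of in-neighbors of `v` lying in `X`. -/
noncomputable def inDeg (N : Finset Vertex) (X : Set Vertex) (v : Vertex) : ℕ :=
  open Classical in (N.filter (fun d => v - d ∈ X)).card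

section InDeg

variable {N : Finset Vertex} {X Y : Set Vertex} {v d : Vertex}

lemma inDeg_mono (h : X ⊆ Y) : inDeg N X v ≤ inDeg N Y v := by
  classical
  exact Finset.card_le_card fun d hd => by
    simp only [Finset.mem_filter] at hd ⊢
    exact ⟨hd.1, h hd.2⟩

lemma inDeg_le_card : inDeg N X v ≤ N.card := by
  classical
  exact Finset.card_filter_le _ _

lemma inDeg_lt_card (hd : d ∈ N) (h : v - d ∉ X) : inDeg N X v < N.card := by
  classical
  exact Finset.card_lt_card <| Finset.filter_ssubset.2 ⟨d, hd, h⟩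

lemma inDeg_eq_card (h : ∀ d ∈ N, v - d ∈ X) : inDeg N X v = N.card := by
  classical
  rw [inDeg, Finset.filter_true_of_mem h]

lemma inDeg_eq_zero (h : ∀ d ∈ N, v - d ∉ X) : inDeg N X v = 0 := by
  classical
  rw [inDeg, Finset.filter_false_of_mem h, Finset.card_empty]

lemma inDeg_pos (hd : d ∈ N) (h : v - d ∈ X) : 0 < inDeg N X v := by
  classical
  exact Finset.card_pos.2 ⟨d, Finset.mem_filter.2 ⟨hd, h⟩⟩

lemma exists_of_inDeg_pos (h : 0 < inDeg N X v) : ∃ d ∈ N, v - d ∈ X := by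
  by_contra! hcon
  exact h.ne' (inDeg_eq_zero hcon)

lemma forall_of_card_le_inDeg (h : N.card ≤ inDeg N X v) : ∀ d ∈ N, v - d ∈ X := by
  by_contra! ⟨d, hd, hcon⟩
  exact (inDeg_lt_card hd hcon).not_ge h

lemma inDeg_union_le : inDeg N (X ∪ Y) v ≤ inDeg N X v + inDeg N Y v := by
  classical
  simp only [inDeg, Set.mem_union, Finset.filter_or]
  exact Finset.card_union_le _ _

lemma inDeg_union (h : Disjoint X Y) : inDeg N (X ∪ Y) v = inDeg N X v + inDeg N Y v := by
  classical
  simp only [inDeg, Set.mem_union, Finset.filter_or]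
  exact Finset.card_union_of_disjoint
    (Finset.disjoint_filter.2 fun d _ hX hY => Set.disjoint_left.1 h hX hY)

end InDeg

/-- The set of vertices that have fired before time `t`, provided no vertex fires twice. -/
noncomputable def grow (N : Finset Vertex) (c : Config) : ℕ → Set Vertex
  | 0 => ∅
  | t + 1 => {v | N.card ≤ c v + inDeg N (grow N c t) v}

/-- The set of vertices that ever belong to `grow`. -/
def fired (N : Finset Vertex) (c : Config) : Set Vertex := {v | ∃ t, v ∈ grow N c t}

section Grow

variable {N : Finset Vertex} {c : Config} {v w : Vertex} {t : ℕ}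

lemma notMem_grow_zero : v ∉ grow N c 0 := id

lemma mem_grow_succ : v ∈ grow N c (t + 1) ↔ N.card ≤ c v + inDeg N (grow N c t) v := Iff.rfl

lemma grow_mono : Monotone (grow N c) := by
  refine monotone_nat_of_le_succ fun t => ?_
  induction t with
  | zero => exact Set.empty_subset _
  | succ t ih =>
    intro v hv
    exact le_trans (mem_grow_succ.1 hv) (Nat.add_le_add_left (inDeg_mono ih) _)

lemma grow_subset_fired : grow N c t ⊆ fired N c := fun _ h => ⟨t, h⟩

lemma mem_fired_of_le (h : N.card ≤ c v + inDeg N (fired N c) v) : v ∈ fired N c := by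
  have key : ∀ d : Vertex, ∃ t, v - d ∈ fired N c → v - d ∈ grow N c t := by
    intro d
    by_cases hd : v - d ∈ fired N c
    · exact hd.imp fun t ht _ => ht
    · exact ⟨0, fun h => absurd h hd⟩
  choose T hT using key
  refine ⟨N.sup T + 1, h.trans (Nat.add_le_add_left ?_ _)⟩
  classical
  exact Finset.card_le_card fun d hd => by
    simp only [Finset.mem_filter] at hd ⊢
    exact ⟨hd.1, grow_mono (Finset.le_sup hd.1) (hT d hd.2)⟩

lemma lt_card_of_notMem_fired (h : v ∉ fired N c) :
    c v + inDeg N (fired N c) v < N.card :=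
  not_le.1 fun hcon => h (mem_fired_of_le hcon)

lemma fired_subset {A : Set Vertex} (h : ∀ v ∉ A, c v + inDeg N A v < N.card) :
    fired N c ⊆ A := by
  rintro v ⟨t, ht⟩
  induction t generalizing v with
  | zero => exact absurd ht notMem_grow_zero
  | succ t ih =>
    by_contra hv
    have h1 := h v hv
    have h2 : inDeg N (grow N c t) v ≤ inDeg N A v := inDeg_mono fun u hu => ih hu
    have h3 := mem_grow_succ.1 ht
    omega

lemma iterate_sandF_eq (h : ∀ v, c v + inDeg N (fired N c) v < 2 * N.card) (t : ℕ) (v : Vertex) :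
    (v ∈ grow N c t → (sandF N)^[t] c v + N.card = c v + inDeg N (grow N c t) v) ∧
    (v ∉ grow N c t → (sandF N)^[t] c v = c v + inDeg N (grow N c t) v) := by
  induction t generalizing v with
  | zero =>
    exact ⟨fun h => absurd h notMem_grow_zero, fun _ => by
      rw [inDeg_eq_zero fun d _ => notMem_grow_zero]; rfl⟩
  | succ t ih =>
    have act : ∀ v, N.card ≤ (sandF N)^[t] c v ↔ v ∈ grow N c (t + 1) \ grow N c t := by
      intro v
      by_cases hv : v ∈ grow N c t
      · have h1 := (ih v).1 hv
        have h2 := h v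
        have h3 : inDeg N (grow N c t) v ≤ inDeg N (fired N c) v := inDeg_mono grow_subset_fired
        simp only [Set.mem_sdiff, hv, not_true, and_false, iff_false, not_le]
        omega
      · rw [(ih v).2 hv]
        simp [mem_grow_succ, hv]
    have hsum : inDeg N (grow N c (t + 1)) v =
        inDeg N (grow N c t) v + inDeg N (grow N c (t + 1) \ grow N c t) v := by
      rw [← inDeg_union Set.disjoint_sdiff_right, Set.union_sdiff_cancel (grow_mono t.le_succ)]
    have hstep : (sandF N)^[t + 1] c v = ((sandF N)^[t] c v -
        if N.card ≤ (sandF N)^[t] c v then N.card else 0) +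
        inDeg N (grow N c (t + 1) \ grow N c t) v := by
      rw [Function.iterate_succ_apply']
      simp only [sandF, inDeg]
      congr 2
      ext d
      simp only [Finset.mem_filter, act]
    rw [hstep, hsum]
    have hact := act v
    by_cases hv : v ∈ grow N c t
    · have h1 := (ih v).1 hv
      have hv' : v ∈ grow N c (t + 1) := grow_mono t.le_succ hv
      have : ¬ N.card ≤ (sandF N)^[t] c v := by simp [hact, hv]
      simp only [this, if_false, hv', not_true, false_imp_iff, and_true, true_imp_iff]
      omega
    · have h1 := (ih v).2 hv
      by_cases hv' : v ∈ grow N c (t + 1)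
      · have : N.card ≤ (sandF N)^[t] c v := by simp [hact, hv, hv']
        simp only [this, if_true, hv', not_true, false_imp_iff, and_true, true_imp_iff]
        omega
      · have : ¬ N.card ≤ (sandF N)^[t] c v := by simp [hact, hv']
        simp only [this, if_false, hv', not_false_iff, false_imp_iff, true_and, true_imp_iff]
        omega

lemma act_iterate_sandF (h : ∀ v, c v + inDeg N (fired N c) v < 2 * N.card) (t : ℕ) :
    Act N ((sandF N)^[t] c) = grow N c (t + 1) \ grow N c t := by
  ext v
  have h1 := iterate_sandF_eq h t v
  by_cases hv : v ∈ grow N c t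
  · have h2 := h v
    have h3 : inDeg N (grow N c t) v ≤ inDeg N (fired N c) v := inDeg_mono grow_subset_fired
    have h4 := h1.1 hv
    simp only [Act, Set.mem_ofPred_eq, Set.mem_sdiff, hv, not_true, and_false, iff_false, not_le]
    omega
  · simp [Act, h1.2 hv, mem_grow_succ, hv]

lemma setOf_unstable_eq_fired (h : ∀ v, c v + inDeg N (fired N c) v < 2 * N.card) :
    {v | ∃ t, N.card ≤ (sandF N)^[t] c v} = fired N c := by
  have hact : ∀ t v, N.card ≤ (sandF N)^[t] c v ↔ v ∈ grow N c (t + 1) \ grow N c t :=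
    fun t v => by rw [← act_iterate_sandF h t]; rfl
  ext v
  simp only [Set.mem_ofPred_eq, hact]
  constructor
  · rintro ⟨t, ht⟩
    exact ⟨_, ht.1⟩
  · rintro ⟨t, ht⟩
    induction t with
    | zero => exact absurd ht notMem_grow_zero
    | succ t ih =>
      by_cases hv : v ∈ grow N c t
      · exact ih hv
      · exact ⟨t, ht, hv⟩

end Grow

/-! ### Adding a single grain to a stable configuration -/

section Source

variable {N : Finset Vertex} {c : Config} {w e : Vertex}

lemma add_single_lt_two_mul (hc : Stable N c) {d : Vertex} (hd : d ∈ N)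
    (hw : w - d ∉ fired N (c + Pi.single w 1)) (v : Vertex) :
    (c + Pi.single w 1 : Config) v + inDeg N (fired N (c + Pi.single w 1)) v < 2 * N.card := by
  have h1 := hc v
  by_cases hv : v = w
  · subst hv
    have := inDeg_lt_card hd hw
    simp only [Pi.add_apply, Pi.single_eq_same]
    omega
  · have : inDeg N (fired N (c + Pi.single w 1)) v ≤ N.card := inDeg_le_card
    simp only [Pi.add_apply, Pi.single_eq_of_ne hv]
    omega

/-- A vertex other than the source fires only after one of its in-neighbors. -/
lemma exists_sub_mem_grow (hc : Stable N c) {v : Vertex} {t : ℕ} (hv : v ≠ w)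
    (h : v ∈ grow N (c + Pi.single w 1) (t + 1)) :
    ∃ d ∈ N, v - d ∈ grow N (c + Pi.single w 1) t := by
  apply exists_of_inDeg_pos
  have h1 := mem_grow_succ.1 h
  have h2 := hc v
  simp only [Pi.add_apply, Pi.single_eq_of_ne hv] at h1
  omega

lemma source_mem_fired (hc : Stable N c) (h : e ∈ fired N (c + Pi.single w 1)) :
    w ∈ fired N (c + Pi.single w 1) := by
  obtain ⟨t, ht⟩ := h
  induction t generalizing e with
  | zero => exact absurd ht notMem_grow_zero
  | succ t ih =>
    by_cases he : e = w
    · exact ⟨_, he ▸ ht⟩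
    · obtain ⟨d, -, hd⟩ := exists_sub_mem_grow hc he ht
      exact ih hd

lemma map_eq_of_mem_fired (hc : Stable N c) (f : Vertex →+ ℤ) (hf : ∀ d ∈ N, f d = 0)
    (h : e ∈ fired N (c + Pi.single w 1)) : f e = f w := by
  obtain ⟨t, ht⟩ := h
  induction t generalizing e with
  | zero => exact absurd ht notMem_grow_zero
  | succ t ih =>
    by_cases he : e = w
    · rw [he]
    · obtain ⟨d, hdN, hd⟩ := exists_sub_mem_grow hc he ht
      have := ih hd
      rwa [map_sub, hf d hdN, sub_zero] at this

lemma exists_map_pos (hc : Stable N c) (f : Vertex →+ ℤ) (hwe : f w < f e) {t : ℕ}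
    (he : e ∈ Act N ((sandF N)^[t] (c + Pi.single w 1))) : ∃ d ∈ N, 0 < f d := by
  by_contra! hN
  have key : ∀ t v, f w < f v → (sandF N)^[t] (c + Pi.single w 1) v < N.card := by
    intro t
    induction t with
    | zero =>
      intro v hv
      have : v ≠ w := by rintro rfl; exact hv.false
      simpa [Pi.single_eq_of_ne this] using hc v
    | succ t ih =>
      intro v hv
      rw [Function.iterate_succ_apply', sandF, Finset.filter_false_of_mem]
      · simpa using (Nat.sub_le _ _).trans_lt (ih v hv)
      · intro d hd
        have := hN d hd
        exact (ih _ (by rw [map_sub]; omega)).not_ge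
  exact (key t e hwe).not_ge he

lemma map_nonneg_of_mem_fired (f : Vertex →+ ℤ) (hc : ∀ v, f v < 0 → c v = 0) (hw : 0 ≤ f w)
    {d : Vertex} (hd : d ∈ N) (hfd : 0 < f d) {v : Vertex}
    (hv : v ∈ fired N (c + Pi.single w 1)) : 0 ≤ f v := by
  refine fired_subset (A := {v | 0 ≤ f v}) (fun v hv => ?_) hv
  simp only [Set.mem_ofPred_eq, not_le] at hv
  have hvw : v ≠ w := by rintro rfl; omega
  have : inDeg N {v | 0 ≤ f v} v < N.card := inDeg_lt_card hd (by
    simp only [Set.mem_ofPred_eq, map_sub]; omega)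
  simpa [hc v hv, Pi.single_eq_of_ne hvw] using this

lemma map_lt_of_mem_fired (f : Vertex →+ ℤ) {n : ℤ} (hc : ∀ v, n ≤ f v → c v = 0) (hw : f w < n)
    {d : Vertex} (hd : d ∈ N) (hfd : f d ≤ 0) {v : Vertex}
    (hv : v ∈ fired N (c + Pi.single w 1)) : f v < n := by
  refine fired_subset (A := {v | f v < n}) (fun v hv => ?_) hv
  simp only [Set.mem_ofPred_eq, not_lt] at hv
  have hvw : v ≠ w := by rintro rfl; omega
  have : inDeg N {v | f v < n} v < N.card := inDeg_lt_card hd (by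
    simp only [Set.mem_ofPred_eq, map_sub]; omega)
  simpa [hc v hv, Pi.single_eq_of_ne hvw] using this

end Source

/-! ### Pruning a firing set -/

/-- `IsAncestor N c e i v`: there is a chain of `i` firings from `v` to `e`, each vertex firing
strictly before the next one in the growth process of `c`. -/
inductive IsAncestor (N : Finset Vertex) (c : Config) (e : Vertex) : ℕ → Vertex → Prop
  | refl : IsAncestor N c e 0 e
  | step {i t : ℕ} {v d : Vertex} : IsAncestor N c e i v → d ∈ N → v ∉ grow N c t →
      v - d ∈ grow N c t → IsAncestor N c e (i + 1) (v - d)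

/-- The smallest set containing `K` and every vertex all of whose in-neighbors it contains. -/
inductive Fill (N : Finset Vertex) (K : Set Vertex) : Vertex → Prop
  | base {v : Vertex} : v ∈ K → Fill N K v
  | step {v : Vertex} : (∀ d ∈ N, Fill N K (v - d)) → Fill N K v

section Prune

variable {N : Finset Vertex} {c : Config} {e : Vertex}

lemma IsAncestor.mem_grow {T i : ℕ} {v : Vertex} (he : e ∈ grow N c (T + 1))
    (h : IsAncestor N c e i v) : v ∈ grow N c (T + 1 - i) := by
  induction h with
  | refl => exact he
  | @step i t v d _ _ hv hvd ih =>
    have : t < T + 1 - i := lt_of_not_ge fun hle => hv (grow_mono hle ih)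
    exact grow_mono (by omega) hvd

lemma IsAncestor.map_le (ℓ : Vertex →+ ℤ) {m : ℤ} (hℓ : ∀ d ∈ N, m ≤ ℓ d) {i : ℕ} {v : Vertex}
    (h : IsAncestor N c e i v) : ℓ v ≤ ℓ e - i * m := by
  induction h with
  | refl => simp
  | @step i t v d _ hd _ _ ih =>
    have := hℓ d hd
    rw [map_sub]
    push_cast
    linarith

lemma Fill.exists_sub_nsmul_mem {K : Set Vertex} {v d : Vertex} (hd : d ∈ N) (h : Fill N K v) :
    ∃ j : ℕ, v - j • d ∈ K := by
  induction h with
  | base hv => exact ⟨0, by simpa using hv⟩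
  | @step v _ ih =>
    obtain ⟨j, hj⟩ := ih d hd
    exact ⟨j + 1, by rwa [succ_nsmul', ← sub_sub]⟩

lemma Fill.mem_of_closed {K A : Set Vertex} {v : Vertex} (hK : K ⊆ A)
    (hA : ∀ v, (∀ d ∈ N, v - d ∈ A) → v ∈ A) (h : Fill N K v) : v ∈ A := by
  induction h with
  | base hv => exact hK hv
  | step _ ih => exact hA _ ih

/-- The in-neighbors of a vector `u` different from `e` leave the ancestors of `e` in a suitable
direction, unless the neighborhood lies on a line. -/
lemma exists_separating (hN : ¬ ∀ d ∈ N, ∀ d' ∈ N, d.1 * d'.2 = d.2 * d'.1) {δ : Vertex}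
    (hδ : δ ≠ 0) : ∃ ℓ : Vertex →+ ℤ, ∃ a ∈ N, 0 < ℓ δ ∧ ℓ a ≤ 0 ∧ ∀ d ∈ N, ℓ a ≤ ℓ d := by
  have h1 : ∃ d ∈ N, δ.1 * d.2 ≠ δ.2 * d.1 := by
    by_contra! hcon
    refine hN fun d hd d' hd' => ?_
    have h2 := hcon d hd
    have h3 := hcon d' hd'
    by_cases h0 : δ.1 = 0
    · have h0' : δ.2 ≠ 0 := fun h => hδ (Prod.ext h0 h)
      rw [h0, zero_mul, eq_comm, mul_eq_zero] at h2 h3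
      rw [h2.resolve_left h0', h3.resolve_left h0']
      ring
    · apply mul_left_cancel₀ h0
      linear_combination d.1 * h3 - d'.1 * h2
  obtain ⟨d₀, hd₀, hne⟩ := h1
  obtain ⟨ℓ, hℓ, hℓ0⟩ : ∃ ℓ : Vertex →+ ℤ, 0 < ℓ δ ∧ ℓ d₀ = 0 := by
    have hfst : ∀ v, AddMonoidHom.fst ℤ ℤ v = v.1 := fun _ => rfl
    have hsnd : ∀ v, AddMonoidHom.snd ℤ ℤ v = v.2 := fun _ => rfl
    rcases lt_or_gt_of_ne hne with h | h
    · refine ⟨d₀.1 • AddMonoidHom.snd ℤ ℤ - d₀.2 • AddMonoidHom.fst ℤ ℤ, ?_, ?_⟩ <;>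
        simp [-AddMonoidHom.coe_fst, -AddMonoidHom.coe_snd, hfst, hsnd] <;> linarith
    · refine ⟨d₀.2 • AddMonoidHom.fst ℤ ℤ - d₀.1 • AddMonoidHom.snd ℤ ℤ, ?_, ?_⟩ <;>
        simp [-AddMonoidHom.coe_fst, -AddMonoidHom.coe_snd, hfst, hsnd] <;> linarith
  obtain ⟨a, ha, hmin⟩ := N.exists_min_image ℓ ⟨d₀, hd₀⟩
  exact ⟨ℓ, a, ha, hℓ, hℓ0 ▸ hmin d₀ hd₀, hmin⟩

/-- The largest content on `A` that stays stable when all of `B` fires, plus a grain at `w`. -/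
noncomputable def maxConf (N : Finset Vertex) (A B : Set Vertex) (w : Vertex) : Config :=
  open Classical in (fun v => if v ∈ A then N.card - 1 - inDeg N B v else 0) + Pi.single w 1

/-- If `e` fires in the maximal configuration on `A`, then it fires alone at some time once the
configuration is restricted to a suitable subset `R` of `A`. -/
theorem exists_prune (hN : ¬ ∀ d ∈ N, ∀ d' ∈ N, d.1 * d'.2 = d.2 * d'.1) {A B : Set Vertex}
    {w : Vertex} (hAB : Disjoint A B) (hw : w ∈ A)
    (hAfill : ∀ v, (∀ d ∈ N, v - d ∈ A) → v ∈ A) (he : e ∈ fired N (maxConf N A B w)) :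
    ∃ R : Set Vertex, ∃ T : ℕ, R ⊆ A ∧
      (∀ ℓ : Vertex →+ ℤ, ∀ a ∈ N, ℓ a = 0 → (∀ d ∈ N, 0 ≤ ℓ d) → ∀ v ∈ R, ℓ v ≤ ℓ e) ∧
      ∀ c' : Config, (∀ v ∈ R, c' v = N.card - 1 - inDeg N B v) → (∀ v ∈ A, v ∉ R → c' v = 0) →
        fired N (c' + Pi.single w 1) ⊆ A →
        grow N (c' + Pi.single w 1) (T + 1) \ grow N (c' + Pi.single w 1) T = {e} := by
  classical
  have hcard : 0 < N.card := by
    rw [Finset.card_pos]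
    by_contra h
    exact hN (by simp [Finset.not_nonempty_iff_eq_empty.1 h])
  have maxConf_le : ∀ v, v ≠ w → maxConf N A B w v < N.card := by
    intro v hv
    simp only [maxConf, Pi.add_apply, Pi.single_eq_of_ne hv]
    split_ifs <;> omega
  have hsub : fired N (maxConf N A B w) ⊆ A := by
    refine fired_subset fun v hv => ?_
    have hvw : v ≠ w := fun h => hv (h ▸ hw)
    have : ¬ ∀ d ∈ N, v - d ∈ A := fun h => hv (hAfill v h)
    simpa [maxConf, hv, Pi.single_eq_of_ne hvw] using mt forall_of_card_le_inDeg this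
  set m := maxConf N A B w with hm
  obtain ⟨T, heT, heT'⟩ : ∃ T, e ∈ grow N m (T + 1) ∧ e ∉ grow N m T := by
    obtain ⟨t, ht⟩ := he
    induction t with
    | zero => exact absurd ht notMem_grow_zero
    | succ t ih =>
      by_cases h : e ∈ grow N m t
      · exact ih h
      · exact ⟨t, ht, h⟩
  set K : Set Vertex := {v | ∃ i, IsAncestor N m e i v} with hK
  have hKe : e ∈ K := ⟨0, .refl⟩
  have hKin : ∀ {v d : Vertex} {t : ℕ}, v ∈ K → d ∈ N → v ∉ grow N m t → v - d ∈ grow N m t →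
      v - d ∈ K := by
    rintro v d t ⟨i, hi⟩ hd hv hvd
    exact ⟨i + 1, hi.step hd hv hvd⟩
  have hKA : K ⊆ A := by
    rintro v ⟨i, hi⟩
    exact hsub ⟨_, hi.mem_grow heT⟩
  have hwK : w ∈ K := by
    by_contra hwK
    have : ∀ t, ∀ v ∈ K, v ∉ grow N m t := by
      intro t
      induction t with
      | zero => exact fun _ _ => notMem_grow_zero
      | succ t ih =>
        intro v hv hvt
        have h1 := maxConf_le v (fun h => hwK (h ▸ hv))
        have h2 := mem_grow_succ.1 hvt
        obtain ⟨d, hd, hvd⟩ := exists_of_inDeg_pos (show 0 < inDeg N (grow N m t) v by omega)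
        exact ih _ (hKin hv hd (ih v hv) hvd) hvd
    exact this _ e hKe heT
  set R : Set Vertex := {v | Fill N K v} with hR
  have hKR : K ⊆ R := fun v hv => .base hv
  have hRA : R ⊆ A := fun v hv => Fill.mem_of_closed hKA hAfill hv
  have hRstep : ∀ {v}, v ∈ R → v ∉ K → ∀ d ∈ N, v - d ∈ R := by
    intro v hv hvK
    cases hv with
    | base h => exact absurd h hvK
    | step h => exact h
  refine ⟨R, T, hRA, ?_, ?_⟩
  · intro ℓ a ha ha0 hpos v hv
    obtain ⟨j, i, hi⟩ := Fill.exists_sub_nsmul_mem ha hv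
    have := hi.map_le ℓ hpos
    rwa [map_sub, map_nsmul, ha0, nsmul_zero, mul_zero, sub_zero, sub_zero] at this
  intro c' hc'R hc'A hfired
  set g := c' + Pi.single w 1 with hg
  have hgm : ∀ v ∈ R, g v = m v := by
    intro v hv
    simp only [hg, hm, maxConf, Pi.add_apply, hRA hv, if_true, hc'R v hv]
  have hgle : ∀ v ∈ A, g v ≤ m v := by
    intro v hv
    by_cases hvR : v ∈ R
    · exact (hgm v hvR).le
    · simp [hg, hm, maxConf, hv, hc'A v hv hvR]
  have hgm_sub : ∀ t, grow N g t ⊆ grow N m t := by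
    intro t
    induction t with
    | zero => exact subset_rfl
    | succ t ih =>
      intro v hv
      have h1 := hgle v (hfired ⟨_, hv⟩)
      have h2 : inDeg N (grow N g t) v ≤ inDeg N (grow N m t) v := inDeg_mono ih
      have h3 := mem_grow_succ.1 hv
      exact mem_grow_succ.2 (by omega)
  have hKgrow : ∀ t, ∀ v ∈ K, v ∈ grow N m t → v ∈ grow N g t := by
    intro t
    induction t with
    | zero => exact fun v _ h => h
    | succ t ih =>
      intro v hv hvt
      by_cases hvt' : v ∈ grow N m t
      · exact grow_mono t.le_succ (ih v hv hvt')
      · have h1 := mem_grow_succ.1 hvt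
        have h2 : inDeg N (grow N m t) v ≤ inDeg N (grow N g t) v := by
          exact Finset.card_le_card fun d hd => by
            simp only [Finset.mem_filter] at hd ⊢
            exact ⟨hd.1, ih _ (hKin hv hd.1 hvt' hd.2) hd.2⟩
        rw [← hgm v (hKR hv)] at h1
        exact mem_grow_succ.2 (by omega)
  have hgR : ∀ t, grow N g t ⊆ R := by
    intro t
    induction t with
    | zero => exact Set.empty_subset _
    | succ t ih =>
      intro v hv
      by_contra hvR
      have hvw : v ≠ w := fun h => hvR (h ▸ hKR hwK)
      have h1 := mem_grow_succ.1 hv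
      have h0 : g v = 0 := by
        simp [hg, Pi.single_eq_of_ne hvw, hc'A v (hfired ⟨_, hv⟩) hvR]
      rw [h0, zero_add] at h1
      exact hvR (Fill.step fun d hd => ih (forall_of_card_le_inDeg h1 d hd))
  have hfull : ∀ v ∈ R, v ∉ K → ∀ d ∈ N, ∀ t, v - d ∈ grow N g t → v ∈ grow N g (t + 1) := by
    intro v hv hvK d hd t hvd
    have h1 : inDeg N B v = 0 := inDeg_eq_zero fun d hd =>
      Set.disjoint_left.1 hAB (hRA (hRstep hv hvK d hd))
    have h2 := hc'R v hv
    have h3 := inDeg_pos hd hvd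
    have h4 : c' v ≤ g v := Nat.le_add_right _ _
    exact mem_grow_succ.2 (by omega)
  refine Set.eq_singleton_iff_unique_mem.2
    ⟨⟨hKgrow _ e hKe heT, fun h => heT' (hgm_sub _ h)⟩, ?_⟩
  rintro u ⟨huT, huT'⟩
  by_contra hue
  obtain ⟨ℓ, a, ha, hℓ, ha0, hmin⟩ := exists_separating hN (sub_ne_zero.2 hue)
  rw [map_sub] at hℓ
  have huK : u ∉ K := by
    rintro ⟨i, hi⟩
    cases i with
    | zero => cases hi; exact hue rfl
    | succ i => exact huT' (hKgrow _ u ⟨_, hi⟩ (grow_mono (by omega) (hi.mem_grow heT)))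
  have chain : ∀ j : ℕ, u - j • a ∈ R ∧ u - j • a ∉ K ∧ u - j • a ∉ grow N g (T - j) := by
    intro j
    induction j with
    | zero => simpa using ⟨hgR _ huT, huK, huT'⟩
    | succ j ih =>
      obtain ⟨hjR, hjK, hjT⟩ := ih
      have hsucc : u - (j + 1) • a = u - j • a - a := by rw [succ_nsmul, sub_sub]
      have hnot : u - (j + 1) • a ∉ grow N g (T - (j + 1)) := by
        intro h
        rw [hsucc] at h
        rcases le_or_gt (j + 1) T with hle | hlt
        · have := hfull _ hjR hjK a ha _ h
          rw [show T - (j + 1) + 1 = T - j by omega] at this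
          exact hjT this
        · rw [Nat.sub_eq_zero_of_le hlt.le] at h
          exact notMem_grow_zero h
      refine ⟨hsucc ▸ hRstep hjR hjK a ha, ?_, hnot⟩
      rintro ⟨i, hi⟩
      have h1 := hi.map_le ℓ hmin
      rw [map_sub, map_nsmul, nsmul_eq_mul] at h1
      rcases le_or_gt i (j + 1) with hle | hlt
      · have : (i : ℤ) ≤ ((j + 1 : ℕ) : ℤ) := by exact_mod_cast hle
        nlinarith
      · exact hnot (hKgrow _ _ ⟨_, hi⟩ (grow_mono (by omega) (hi.mem_grow heT)))
  obtain ⟨j, hj⟩ := Fill.exists_sub_nsmul_mem ha (hgR _ huT)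
  exact (chain j).2.1 hj

end Prune

/-! ### Separating the two firing sets -/

section Separate

variable {N : Finset Vertex} {c : Config} {w m e : Vertex}

lemma mem_diff_of_forall_sub_mem (hc : Stable N c) {f : Vertex →+ ℤ} (hfm : f m = 0)
    (hfN : ∃ d ∈ N, 0 < f d) (hV : ∀ v ∈ fired N (c + Pi.single w 1), 0 ≤ f v) {v : Vertex}
    (h : ∀ d ∈ N, v - d ∈ fired N (c + Pi.single w 1) \ fired N (c + Pi.single m 1)) :
    v ∈ fired N (c + Pi.single w 1) \ fired N (c + Pi.single m 1) := by
  refine ⟨mem_fired_of_le ?_, ?_⟩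
  · rw [inDeg_eq_card fun d hd => (h d hd).1]
    exact Nat.le_add_left _ _
  · rintro ⟨t, ht⟩
    by_cases hv : v = m
    · obtain ⟨d, hd, hfd⟩ := hfN
      have := hV _ (h d hd).1
      rw [map_sub, hv, hfm] at this
      omega
    · cases t with
      | zero => exact notMem_grow_zero ht
      | succ t =>
        obtain ⟨d, hd, hvd⟩ := exists_sub_mem_grow hc hv ht
        exact (h d hd).2 ⟨_, hvd⟩

lemma add_inDeg_lt_of_notMem_fired {v : Vertex} (hv : v ∉ fired N (c + Pi.single w 1)) :
    c v + inDeg N (fired N (c + Pi.single w 1)) v < N.card :=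
  lt_of_le_of_lt (Nat.add_le_add_right (Nat.le_add_right _ _) _) (lt_card_of_notMem_fired hv)

lemma diff_subset_fired_maxConf :
    fired N (c + Pi.single w 1) \ fired N (c + Pi.single m 1) ⊆
      fired N (maxConf N (fired N (c + Pi.single w 1) \ fired N (c + Pi.single m 1))
        (fired N (c + Pi.single m 1) \ fired N (c + Pi.single w 1)) w) := by
  set V := fired N (c + Pi.single w 1) with hV
  set V' := fired N (c + Pi.single m 1) with hV'
  set q := maxConf N (V \ V') (V' \ V) w with hq
  have key : ∀ t, ∀ v ∈ V \ V', v ∈ grow N (c + Pi.single w 1) t → v ∈ grow N q t := by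
    intro t
    induction t with
    | zero => exact fun v _ h => h
    | succ t ih =>
      intro v hv hvt
      have h1 := mem_grow_succ.1 hvt
      have h2 := add_inDeg_lt_of_notMem_fired (c := c) (w := m) hv.2
      rw [← hV'] at h2
      have h3 : inDeg N V' v = inDeg N (V' ∩ V) v + inDeg N (V' \ V) v := by
        rw [← inDeg_union, Set.inter_union_sdiff]
        exact Set.disjoint_left.2 fun x hx hx' => hx'.2 hx.2
      have h4 : inDeg N (grow N (c + Pi.single w 1) t) v ≤
          inDeg N (V' ∩ V) v + inDeg N (grow N q t) v := by
        refine le_trans (inDeg_mono fun x hx => ?_) inDeg_union_le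
        by_cases hx' : x ∈ V'
        · exact Or.inl ⟨hx', ⟨t, hx⟩⟩
        · exact Or.inr (ih x ⟨⟨t, hx⟩, hx'⟩ hx)
      have h5 : q v = N.card - 1 - inDeg N (V' \ V) v + (Pi.single w 1 : Config) v := by
        simp [hq, maxConf, hv.1, hv.2]
      rw [Pi.add_apply] at h1
      exact mem_grow_succ.2 (by omega)
  rintro v hv
  obtain ⟨t, ht⟩ := hv.1
  exact ⟨t, key t v hv ht⟩

lemma source_mem_of_mem_fired_maxConf {A B : Set Vertex} (hN : 2 ≤ N.card)
    (he : e ∈ fired N (maxConf N A B w)) : w ∈ A := by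
  classical
  by_contra hw
  have : fired N (maxConf N A B w) ⊆ ∅ := by
    refine fired_subset fun v _ => ?_
    rw [inDeg_eq_zero fun d _ => Set.notMem_empty _]
    by_cases hv : v = w
    · subst hv
      simp only [maxConf, Pi.add_apply, hw, if_false, Pi.single_eq_same]
      omega
    · simp only [maxConf, Pi.add_apply, Pi.single_eq_of_ne hv]
      split_ifs <;> omega
  exact this he

lemma two_le_card (hN : ¬ ∀ d ∈ N, ∀ d' ∈ N, d.1 * d'.2 = d.2 * d'.1) : 2 ≤ N.card := by
  by_contra! h
  refine hN fun d hd d' hd' => ?_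
  rw [Finset.card_le_one.1 (by omega) d hd d' hd', mul_comm]

/-- One of the two directions of a crossing, separated from the other one: whatever pruned
configuration is put on the firing set of the other direction, `e` fires alone at some time and
only vertices outside of the other firing set fire. -/
theorem exists_separated (hN : ¬ ∀ d ∈ N, ∀ d' ∈ N, d.1 * d'.2 = d.2 * d'.1) (hc : Stable N c)
    {f g : Vertex →+ ℤ} (hfm : f m = 0) (hgw : g w = 0) (hfN : ∃ d ∈ N, 0 < f d)
    (hgN : ∃ d ∈ N, 0 < g d) {A B : Set Vertex}
    (hA : A = fired N (c + Pi.single w 1) \ fired N (c + Pi.single m 1))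
    (hB : B = fired N (c + Pi.single m 1) \ fired N (c + Pi.single w 1))
    (hf : ∀ v ∈ fired N (c + Pi.single w 1), 0 ≤ f v)
    (hg : ∀ v ∈ fired N (c + Pi.single w 1), 0 ≤ g v) (he : e ∈ A) :
    ∃ R ⊆ A, ∃ T : ℕ,
      (∀ ℓ : Vertex →+ ℤ, ∀ a ∈ N, ℓ a = 0 → (∀ d ∈ N, 0 ≤ ℓ d) → ∀ v ∈ R, ℓ v ≤ ℓ e) ∧
      ∀ R' ⊆ B, ∀ c' : Config, Stable N c' → (∀ v ∈ R, c' v = N.card - 1 - inDeg N B v) →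
        (∀ v ∈ R', c' v = N.card - 1 - inDeg N A v) → (∀ v ∉ R, v ∉ R' → c' v = 0) →
        Act N ((sandF N)^[T] (c' + Pi.single w 1)) = {e} ∧
        {v | ∃ t, N.card ≤ (sandF N)^[t] (c' + Pi.single w 1) v} ⊆ A := by
  have hAB : Disjoint A B := by
    rw [hA, hB]
    exact Set.disjoint_left.2 fun x hx hx' => hx'.2 hx.1
  have hfill : ∀ v, (∀ d ∈ N, v - d ∈ A) → v ∈ A := by
    rw [hA]
    exact fun v => mem_diff_of_forall_sub_mem hc hfm hfN hf
  have hemax : e ∈ fired N (maxConf N A B w) := by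
    rw [hA, hB]
    exact diff_subset_fired_maxConf (hA ▸ he)
  have hwA := source_mem_of_mem_fired_maxConf (two_le_card hN) hemax
  obtain ⟨R, T, hRA, hbound, hprune⟩ := exists_prune hN hAB hwA hfill hemax
  refine ⟨R, hRA, T, hbound, fun R' hR' c' hc' hcR hcR' hc0 => ?_⟩
  have hsub : fired N (c' + Pi.single w 1) ⊆ A := by
    refine fired_subset fun v hv => ?_
    have hvw : v ≠ w := fun h => hv (h ▸ hwA)
    rw [Pi.add_apply, Pi.single_eq_of_ne hvw, add_zero]
    by_cases hvR' : v ∈ R'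
    · have h1 := hR' hvR'
      rw [hB] at h1
      have h2 := add_inDeg_lt_of_notMem_fired h1.2
      have h3 : inDeg N A v ≤ inDeg N (fired N (c + Pi.single w 1)) v :=
        inDeg_mono (hA ▸ Set.sdiff_subset)
      rw [hcR' v hvR']
      omega
    · rw [hc0 v (fun h => hv (hRA h)) hvR', zero_add]
      exact not_le.1 fun h => hv (hfill v (forall_of_card_le_inDeg h))
  obtain ⟨d, hd, hgd⟩ := hgN
  have hlt := add_single_lt_two_mul (w := w) hc' hd fun h => by
    have h1 := hsub h
    rw [hA] at h1
    have h2 := hg _ h1.1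
    rw [map_sub, hgw] at h2
    omega
  rw [act_iterate_sandF hlt, setOf_unstable_eq_fired hlt]
  exact ⟨hprune c' hcR (fun v hv hvR => hc0 v hvR fun h =>
    Set.disjoint_left.1 hAB hv (hR' h)) hsub, hsub⟩

lemma map_le_of_forall_pos {f g : Vertex →+ ℤ} (hpos : ∀ d ∈ N, 0 < f d)
    (hN : ¬ ∀ d ∈ N, ∀ d' ∈ N, f d * g d' = g d * f d') {v : Vertex}
    (hv : ∀ ℓ : Vertex →+ ℤ, ∀ a ∈ N, ℓ a = 0 → (∀ d ∈ N, 0 ≤ ℓ d) → ℓ v ≤ ℓ e) :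
    f v ≤ f e := by
  have hne : N.Nonempty := by
    by_contra h
    exact hN (by simp [Finset.not_nonempty_iff_eq_empty.1 h])
  obtain ⟨a, ha, hamax⟩ := N.exists_max_image (fun d => (g d : ℚ) / f d) hne
  obtain ⟨b, hb, hbmin⟩ := N.exists_min_image (fun d => (g d : ℚ) / f d) hne
  have hslope : ∀ d ∈ N, ∀ d' ∈ N, (g d : ℚ) / f d ≤ (g d' : ℚ) / f d' →
      g d * f d' ≤ g d' * f d := by
    intro d hd d' hd' h
    rw [div_le_div_iff₀ (by exact_mod_cast hpos d hd) (by exact_mod_cast hpos d' hd')] at h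
    exact_mod_cast h
  have h1 := hv (g a • f - f a • g) a ha (by simp [mul_comm]) fun d hd => by
    have := hslope d hd a ha (hamax d hd)
    simp only [AddMonoidHom.sub_apply, AddMonoidHom.smul_apply, smul_eq_mul]
    linarith
  have h2 := hv (f b • g - g b • f) b hb (by simp [mul_comm]) fun d hd => by
    have := hslope b hb d hd (hbmin d hd)
    simp only [AddMonoidHom.sub_apply, AddMonoidHom.smul_apply, smul_eq_mul]
    linarith
  simp only [AddMonoidHom.sub_apply, AddMonoidHom.smul_apply, smul_eq_mul] at h1 h2
  by_contra! hlt
  have hfa := hpos a ha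
  have hfb := hpos b hb
  have hab : g a * f b ≤ g b * f a := by
    have h3 : (g a * f b - g b * f a) * (f v - f e) ≤ 0 := by nlinarith
    by_contra! h4
    nlinarith
  have heq : ∀ d ∈ N, g d * f a = g a * f d := by
    intro d hd
    refine le_antisymm (hslope d hd a ha (hamax d hd)) ?_
    have h3 := hslope b hb d hd (hbmin d hd)
    have h4 := hpos d hd
    have h5 : f b * (g a * f d) ≤ f b * (g d * f a) := by nlinarith
    exact le_of_mul_le_mul_left h5 hfb
  refine hN fun d hd d' hd' => mul_left_cancel₀ hfa.ne' ?_
  linear_combination f d * heq d' hd' - f d' * heq d hd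

end Separate

/-! ### Unit vectors on the borders -/

section Border

variable {n : ℕ} {u : ℕ → ℕ}

lemma IsUnitVec.exists_eq_single (h : IsUnitVec n u) : ∃ k < n, u = Pi.single k 1 := by
  obtain ⟨hle, hsupp, k, hk, huniq⟩ := h
  refine ⟨k, not_le.1 fun hnk => ?_, funext fun i => ?_⟩
  · rw [hsupp k hnk] at hk
    exact zero_ne_one hk
  · by_cases hi : i = k
    · rw [hi, Pi.single_eq_same, hk]
    · have h1 := hle i
      have h2 : u i ≠ 1 := fun h => hi (huniq i h)
      rw [Pi.single_eq_of_ne hi]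
      omega

lemma confW_single {k : ℕ} (hk : k < n) :
    confW n (Pi.single k 1) = Pi.single ((0, k) : Vertex) 1 := by
  ext ⟨x, y⟩
  simp only [confW, Pi.single_apply, Prod.mk.injEq]
  split_ifs <;> omega

lemma confN_single {k : ℕ} (hk : k < n) :
    confN n (Pi.single k 1) = Pi.single ((k, 0) : Vertex) 1 := by
  ext ⟨x, y⟩
  simp only [confN, Pi.single_apply, Prod.mk.injEq]
  split_ifs <;> omega

lemma setOf_confE_single {k : ℕ} (hk : k < n) :
    {v | confE n (Pi.single k 1) v = 1} = {((n - 1, k) : Vertex)} := by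
  ext ⟨x, y⟩
  simp only [confE, Pi.single_apply, Set.mem_ofPred_eq, Set.mem_singleton_iff, Prod.mk.injEq]
  split_ifs <;> simp only [true_iff, false_iff] <;> omega

lemma setOf_confS_single {k : ℕ} (hk : k < n) :
    {v | confS n (Pi.single k 1) v = 1} = {((k, n - 1) : Vertex)} := by
  ext ⟨x, y⟩
  simp only [confS, Pi.single_apply, Set.mem_ofPred_eq, Set.mem_singleton_iff, Prod.mk.injEq]
  split_ifs <;> simp only [true_iff, false_iff] <;> omega

end Border

/-- A neighborhood contained in a line cannot transport in two directions with slopes on both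
sides of the diagonal. -/
lemma not_collinear_of_transport {N : Finset Vertex} {c : Config} {w e m s : Vertex} {L : ℤ}
    (hc : Stable N c) (he : e ∈ fired N (c + Pi.single w 1)) (hs : s ∈ fired N (c + Pi.single m 1))
    (hN : ∃ d ∈ N, 0 < d.1) (hx : e.1 - w.1 = L) (hy : |e.2 - w.2| < L)
    (hx' : |s.1 - m.1| < L) (hy' : s.2 - m.2 = L) :
    ¬ ∀ d ∈ N, ∀ d' ∈ N, d.1 * d'.2 = d.2 * d'.1 := by
  intro hcol
  obtain ⟨a, ha, hapos⟩ := hN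
  let ℓ : Vertex →+ ℤ := a.2 • AddMonoidHom.fst ℤ ℤ - a.1 • AddMonoidHom.snd ℤ ℤ
  have hℓ : ∀ v, ℓ v = a.2 * v.1 - a.1 * v.2 := fun _ => rfl
  have hℓN : ∀ d ∈ N, ℓ d = 0 := fun d hd => by
    rw [hℓ]
    linear_combination hcol d hd a ha
  have h1 := map_eq_of_mem_fired hc ℓ hℓN he
  have h2 := map_eq_of_mem_fired hc ℓ hℓN hs
  rw [hℓ, hℓ] at h1 h2
  have hL : 0 < L := (abs_nonneg _).trans_lt hy
  have h3 : a.2 * L = a.1 * (e.2 - w.2) := by rw [← hx]; linear_combination h1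
  have h4 : a.1 * L = a.2 * (s.1 - m.1) := by rw [← hy']; linear_combination -h2
  have h5 : |a.2| * L = a.1 * |e.2 - w.2| := by
    have h := congrArg abs h3
    rwa [abs_mul, abs_mul, abs_of_pos hL, abs_of_pos hapos] at h
  have h6 : a.1 * L = |a.2| * |s.1 - m.1| := by
    rw [← abs_mul, ← h4, abs_of_pos (mul_pos hapos hL)]
  have h7 : |a.2| < a.1 := by
    have : |a.2| * L < a.1 * L := h5 ▸ mul_lt_mul_of_pos_left hy hapos
    exact lt_of_mul_lt_mul_right this hL.le
  have h8 : |a.2| * |s.1 - m.1| ≤ |a.2| * L := mul_le_mul_of_nonneg_left hx'.le (abs_nonneg _)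
  nlinarith

/-- A pruned firing set stays below every upper bound of the support of the configuration. -/
lemma map_lt_of_mem_pruned {N : Finset Vertex} {c : Config} {w e : Vertex} {n : ℤ}
    {f g : Vertex →+ ℤ} (hN : ¬ ∀ d ∈ N, ∀ d' ∈ N, f d * g d' = g d * f d')
    (hc : ∀ v, n ≤ f v → c v = 0) (hw : f w < n) (he : f e < n) {v : Vertex}
    (hv : v ∈ fired N (c + Pi.single w 1))
    (hbound : ∀ ℓ : Vertex →+ ℤ, ∀ a ∈ N, ℓ a = 0 → (∀ d ∈ N, 0 ≤ ℓ d) → ℓ v ≤ ℓ e) :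
    f v < n := by
  by_cases hpos : ∀ d ∈ N, 0 < f d
  · exact (map_le_of_forall_pos hpos hN hbound).trans_lt he
  · push Not at hpos
    obtain ⟨d, hd, hfd⟩ := hpos
    exact map_lt_of_mem_fired f hc hw hd hfd hv

/-- if a crossing configuration exists, then one exists whose two firing
graphs are vertex-disjoint. -/
theorem stmt_4 (N : Finset Vertex) (h0 : ((0 : ℤ), (0 : ℤ)) ∉ N)
    (h : CanCross N) :
    ∃ (n : ℕ) (c : Config) (nv e s w : ℕ → ℕ), CrossingConfig N n c nv e s w ∧
      {v : Vertex | ∃ t : ℕ, N.card ≤ (sandF N)^[t] (c + confW n w) v} ∩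
      {v : Vertex | ∃ t : ℕ, N.card ≤ (sandF N)^[t] (c + confN n nv) v} = ∅ := by
  classical
  obtain ⟨n, c, nv, e, s, w, hnv, he, hs, hw, hc, hsize, ⟨t₁, htwe⟩, hws, ⟨t₂, htns⟩, hne⟩ := h
  have hnv' := hnv
  have he' := he
  have hs' := hs
  have hw' := hw
  obtain ⟨kn, hkn, rfl⟩ := hnv'.exists_eq_single
  obtain ⟨ke, hke, rfl⟩ := he'.exists_eq_single
  obtain ⟨ks, hks, rfl⟩ := hs'.exists_eq_single
  obtain ⟨kw, hkw, rfl⟩ := hw'.exists_eq_single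
  simp only [IsolatedWS, IsolatedNE, confW_single hkw, confN_single hkn] at htwe htns hws hne
  rw [setOf_confE_single hke] at htwe
  rw [setOf_confS_single hks] at htns
  have hke' := hws t₁ (n - 1, ke) (htwe ▸ rfl)
  have hks' := hne t₂ (ks, n - 1) (htns ▸ rfl)
  dsimp only at hke' hks'
  set x : Vertex →+ ℤ := AddMonoidHom.fst ℤ ℤ with hx
  set y : Vertex →+ ℤ := AddMonoidHom.snd ℤ ℤ with hy
  have hxv : ∀ v, x v = v.1 := fun _ => rfl
  have hyv : ∀ v, y v = v.2 := fun _ => rfl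
  have hxN : ∃ d ∈ N, 0 < x d :=
    exists_map_pos hc x (w := (0, kw)) (e := (n - 1, ke)) (t := t₁)
      (by simp only [hxv]; omega) (htwe ▸ rfl)
  have hyN : ∃ d ∈ N, 0 < y d :=
    exists_map_pos hc y (w := (kn, 0)) (e := (ks, n - 1)) (t := t₂)
      (by simp only [hyv]; omega) (htns ▸ rfl)
  have hcx : ∀ v, x v < 0 → c v = 0 := fun v hv => hsize v (by rw [hxv] at hv; omega)
  have hcy : ∀ v, y v < 0 → c v = 0 := fun v hv => hsize v (by rw [hyv] at hv; omega)
  have hcx' : ∀ v, (n : ℤ) ≤ x v → c v = 0 := fun v hv => hsize v (by rw [hxv] at hv; omega)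
  have hcy' : ∀ v, (n : ℤ) ≤ y v → c v = 0 := fun v hv => hsize v (by rw [hyv] at hv; omega)
  obtain ⟨dx, hdx, hdx'⟩ := id hxN
  obtain ⟨dy, hdy, hdy'⟩ := id hyN
  set V := fired N (c + Pi.single (0, (kw : ℤ)) 1) with hV
  set V' := fired N (c + Pi.single ((kn : ℤ), 0) 1) with hV'
  have hVx : ∀ v ∈ V, 0 ≤ x v := fun v =>
    map_nonneg_of_mem_fired x hcx (by simp [hxv]) hdx hdx'
  have hVy : ∀ v ∈ V, 0 ≤ y v := fun v =>
    map_nonneg_of_mem_fired y hcy (by simp [hyv]) hdy hdy'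
  have hVx' : ∀ v ∈ V', 0 ≤ x v := fun v =>
    map_nonneg_of_mem_fired x hcx (by simp [hxv]) hdx hdx'
  have hVy' : ∀ v ∈ V', 0 ≤ y v := fun v =>
    map_nonneg_of_mem_fired y hcy (by simp [hyv]) hdy hdy'
  have hltW := add_single_lt_two_mul (w := (0, (kw : ℤ))) hc hdx fun h => by
    have := hVx _ h
    rw [map_sub, hxv] at this
    dsimp only at this
    omega
  have hltN := add_single_lt_two_mul (w := ((kn : ℤ), 0)) hc hdy fun h => by
    have := hVy' _ h
    rw [map_sub, hyv] at this
    dsimp only at this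
    omega
  have hunstW := setOf_unstable_eq_fired hltW
  have hunstN := setOf_unstable_eq_fired hltN
  have hVn : ∀ v ∈ V, v.2 ≠ (n : ℤ) - 1 := fun v hv => by
    rw [hV, ← hunstW] at hv
    obtain ⟨t, ht⟩ := hv
    exact hws t v ht
  have hVn' : ∀ v ∈ V', v.1 ≠ (n : ℤ) - 1 := fun v hv => by
    rw [hV', ← hunstN] at hv
    obtain ⟨t, ht⟩ := hv
    exact hne t v ht
  have heV : ((n : ℤ) - 1, (ke : ℤ)) ∈ V := by
    rw [hV, ← hunstW]
    exact ⟨t₁, htwe.ge rfl⟩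
  have hsV : ((ks : ℤ), (n : ℤ) - 1) ∈ V' := by
    rw [hV', ← hunstN]
    exact ⟨t₂, htns.ge rfl⟩
  have hkw' := hVn _ (source_mem_fired hc heV)
  have hkn' := hVn' _ (source_mem_fired hc hsV)
  dsimp only at hkw' hkn'
  have hcol : ¬ ∀ d ∈ N, ∀ d' ∈ N, d.1 * d'.2 = d.2 * d'.1 :=
    not_collinear_of_transport (L := n - 1) hc heV hsV hxN (by simp)
      (by rw [abs_lt]; dsimp only; omega) (by rw [abs_lt]; dsimp only; omega) (by simp)
  have hcol' : ¬ ∀ d ∈ N, ∀ d' ∈ N, y d * x d' = x d * y d' := fun h =>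
    hcol fun d hd d' hd' => (h d hd d' hd').symm
  obtain ⟨R, hR, T, hRbound, hRfire⟩ := exists_separated hcol hc (f := y) (g := x) rfl rfl hyN hxN
    (A := V \ V') (B := V' \ V) rfl rfl hVy hVx ⟨heV, fun h => hVn' _ h rfl⟩
  obtain ⟨R', hR', T', hRbound', hRfire'⟩ := exists_separated hcol hc (f := x) (g := y) rfl rfl
    hxN hyN (A := V' \ V) (B := V \ V') rfl rfl hVx' hVy' ⟨hsV, fun h => hVn _ h rfl⟩
  have hcard := two_le_card hcol
  set c' : Config := fun v => if v ∈ R then N.card - 1 - inDeg N (V' \ V) v else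
    if v ∈ R' then N.card - 1 - inDeg N (V \ V') v else 0 with hc'
  have hstable : Stable N c' := fun v => by
    simp only [hc']
    split_ifs <;> omega
  have hc'R : ∀ v ∈ R, c' v = N.card - 1 - inDeg N (V' \ V) v := fun v hv => if_pos hv
  have hc'R' : ∀ v ∈ R', c' v = N.card - 1 - inDeg N (V \ V') v := fun v hv => by
    have hvR : v ∉ R := fun h => (hR h).2 (hR' hv).1
    simp [hc', hv, hvR]
  have hc'0 : ∀ v ∉ R, v ∉ R' → c' v = 0 := fun v hv hv' => by simp [hc', hv, hv']
  obtain ⟨hactW, hfireW⟩ := hRfire R' hR' c' hstable hc'R hc'R' hc'0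
  obtain ⟨hactN, hfireN⟩ := hRfire' R hR c' hstable hc'R' hc'R fun v h h' => hc'0 v h' h
  have hbox : HasSize n n c' := fun v hv => by
    refine hc'0 v (fun hvR => hv ?_) fun hvR => hv ?_
    · have hvV := (hR hvR).1
      exact ⟨hVx v hvV,
        map_lt_of_mem_pruned (f := x) (g := y) hcol hcx' (by simp only [hxv]; omega)
          (by simp only [hxv]; omega) hvV fun ℓ a ha h0 hpos => hRbound ℓ a ha h0 hpos v hvR,
        hVy v hvV,
        map_lt_of_mem_pruned (f := y) (g := x) hcol' hcy' (by simp only [hyv]; omega)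
          (by simp only [hyv]; omega) hvV fun ℓ a ha h0 hpos => hRbound ℓ a ha h0 hpos v hvR⟩
    · have hvV := (hR' hvR).1
      exact ⟨hVx' v hvV,
        map_lt_of_mem_pruned (f := x) (g := y) hcol hcx' (by simp only [hxv]; omega)
          (by simp only [hxv]; omega) hvV fun ℓ a ha h0 hpos => hRbound' ℓ a ha h0 hpos v hvR,
        hVy' v hvV,
        map_lt_of_mem_pruned (f := y) (g := x) hcol' hcy' (by simp only [hyv]; omega)
          (by simp only [hyv]; omega) hvV fun ℓ a ha h0 hpos => hRbound' ℓ a ha h0 hpos v hvR⟩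
  refine ⟨n, c', _, _, _, _, ⟨hnv, he, hs, hw, hstable, hbox, ⟨T, ?_⟩, ?_, ⟨T', ?_⟩, ?_⟩, ?_⟩
  · rw [confW_single hkw, setOf_confE_single hke, hactW]
  · rw [IsolatedWS, confW_single hkw]
    exact fun t v hv => hVn v (hfireW ⟨t, hv⟩).1
  · rw [confN_single hkn, setOf_confS_single hks, hactN]
  · rw [IsolatedNE, confN_single hkn]
    exact fun t v hv => hVn' v (hfireN ⟨t, hv⟩).1
  · rw [confW_single hkw, confN_single hkn]
    exact Set.eq_empty_of_forall_notMem fun v hv => (hfireW hv.1).2 (hfireN hv.2).1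
end

section
/- Let s⁺ ⊆ ℝ² be a shape and let s' ⊆ s⁺ be nonempty and non-flat. Then for every k ∈ ℕ there exists a real r₀ > 0 such that for every real r ≥ r₀, the set N⁺_{s',r} has at least k elements. -/
open Finset

/-- A non-collinear triangle in the plane has nonempty interior. -/
lemma interior_convexHull_triangle_nonempty {a b c : ℝ × ℝ}
    (h : ¬ Collinear ℝ ({a, b, c} : Set (ℝ × ℝ))) :
    (interior (convexHull ℝ ({a, b, c} : Set (ℝ × ℝ)))).Nonempty := by
  rw [interior_convexHull_nonempty_iff_affineSpan_eq_top]
  have hind := affineIndependent_iff_not_collinear_set.2 h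
  have htop := hind.affineSpan_eq_top_iff_card_eq_finrank_add_one.2 (by simp)
  rwa [Matrix.range_cons, Matrix.range_cons, Matrix.range_cons, Matrix.range_empty,
    Set.union_empty, Set.singleton_union, Set.singleton_union] at htop

/-- The neighborhood of a bounded shape is finite. -/
lemma finite_shapeNbhd {s : Set (ℝ × ℝ)} (hs : Bornology.IsBounded s) {r : ℝ} (hr : 0 < r) :
    (shapeNbhd s r).Finite := by
  obtain ⟨R, hR⟩ := hs.exists_norm_le
  have bound {z : ℤ} (hz : ‖(z : ℝ) / r‖ ≤ R) : z ∈ Set.Icc ⌊-(R * r)⌋ ⌈R * r⌉ := by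
    rw [Real.norm_eq_abs, abs_le, le_div_iff₀ hr, div_le_iff₀ hr, neg_mul] at hz
    exact ⟨by exact_mod_cast (Int.floor_le _).trans hz.1,
      by exact_mod_cast hz.2.trans (Int.le_ceil _)⟩
  refine ((Set.finite_Icc ⌊-(R * r)⌋ ⌈R * r⌉).prod (Set.finite_Icc ⌊-(R * r)⌋ ⌈R * r⌉)).subset ?_
  rintro ⟨x, y⟩ ⟨hv, -⟩
  have hn := hR _ hv
  exact ⟨bound ((norm_fst_le _).trans hn), bound ((norm_snd_le _).trans hn)⟩

/-- Scaled grid points at bounded offset from the rounding of `r * p` are close to `p`. -/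
lemma dist_ceil_add_div_lt {p δ r : ℝ} {k i : ℕ} (hr : 0 < r) (hδ : (k + 1 : ℝ) < δ * r)
    (hi : i ≤ k) : dist (((⌈r * p⌉ + i : ℤ) : ℝ) / r) p < δ := by
  have h₁ := Int.le_ceil (r * p)
  have h₂ := Int.ceil_lt_add_one (r * p)
  have hi' : (i : ℝ) ≤ k := by exact_mod_cast hi
  have hi₀ : (0 : ℝ) ≤ i := i.cast_nonneg
  rw [Real.dist_eq, abs_lt, lt_sub_iff_add_lt, sub_lt_iff_lt_add, lt_div_iff₀ hr, div_lt_iff₀ hr]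
  push_cast
  constructor <;> nlinarith

/-- a nonempty non-flat subset of a shape yields arbitrarily many discrete
cells for large enough scaling ratios. -/
theorem stmt_9 (sp s' : Set (ℝ × ℝ)) (hbd : Bornology.IsBounded sp)
    (hsub : s' ⊆ sp) (hne : s'.Nonempty) (hnf : NonFlat s') (k : ℕ) :
    ∃ r₀ : ℝ, 0 < r₀ ∧ ∀ r : ℝ, r₀ ≤ r → k ≤ (shapeNbhd s' r).ncard := by
  obtain ⟨x, hx⟩ := hne
  obtain ⟨b, c, hcol, hhull⟩ := hnf x hx
  obtain ⟨p, hp⟩ := interior_convexHull_triangle_nonempty hcol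
  obtain ⟨δ, hδ, hball⟩ := Metric.mem_nhds_iff.1 (mem_interior_iff_mem_nhds.1 hp)
  refine ⟨(k + 2) / δ, by positivity, fun r hr => ?_⟩
  have hr₀ : 0 < r := lt_of_lt_of_le (by positivity) hr
  have hδr : (k + 1 : ℝ) < δ * r := by
    rw [div_le_iff₀ hδ] at hr
    linarith
  let f : ℕ → Vertex := fun i => (⌈r * p.1⌉ + (i : ℤ), ⌈r * p.2⌉ + ((0 : ℕ) : ℤ))
  have hf : Function.Injective f := fun i j hij => by
    simpa [f] using hij
  have hmem : ((((Finset.range (k + 1)).image f).erase (0, 0) : Finset Vertex) : Set Vertex) ⊆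
      shapeNbhd s' r := by
    intro v hv
    obtain ⟨hv₀, hv⟩ := Finset.mem_erase.1 (Finset.mem_coe.1 hv)
    obtain ⟨i, hi, rfl⟩ := Finset.mem_image.1 hv
    refine ⟨hhull (hball ?_), hv₀⟩
    rw [Metric.mem_ball, Prod.dist_eq, max_lt_iff]
    exact ⟨dist_ceil_add_div_lt hr₀ hδr (Nat.lt_succ_iff.1 (Finset.mem_range.1 hi)),
      dist_ceil_add_div_lt hr₀ hδr k.zero_le⟩
  calc k = ((Finset.range (k + 1)).image f).card - 1 := by
        rw [Finset.card_image_of_injective _ hf, Finset.card_range, Nat.add_sub_cancel]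
    _ ≤ (((Finset.range (k + 1)).image f).erase (0, 0)).card := Finset.pred_card_le_card_erase
    _ ≤ (shapeNbhd s' r).ncard := by
        rw [← Set.ncard_coe_finset]
        exact Set.ncard_le_ncard hmem (finite_shapeNbhd (hbd.subset hsub) hr₀)
end

section
/- A path joining the west and east sides of the unit square and a path joining its north and south sides must intersect: if f, g : [0,1] → [0,1]² are continuous with f(0) ∈ {0}×[0,1], f(1) ∈ {1}×[0,1], g(0) ∈ [0,1]×{0}, and g(1) ∈ [0,1]×{1}, then there exist t, s ∈ [0,1] with f(t) = g(s). -/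
open Real in
/-- If `θ` never leaves the half-plane `0 ≤ cos (θ - c)`, it stays within `π / 2` of `c` once it is
there; where moreover `0 ≤ sin (θ - c)`, it lies in the upper half of that interval. -/
theorem mem_Icc_of_cos_nonneg_of_sin_nonneg {θ : ℝ → ℝ} {a b c : ℝ} (hθ : Continuous θ)
    (hcos : ∀ x, 0 ≤ cos (θ x - c)) (ha : θ a ∈ Set.Icc (c - π / 2) (c + π / 2))
    (hsin : 0 ≤ sin (θ b - c)) : θ b ∈ Set.Icc c (c + π / 2) := by
  have hπ := pi_pos
  obtain ⟨ha₁, ha₂⟩ := ha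
  have hup : θ b ≤ c + π / 2 := by
    by_contra! h
    obtain ⟨x, hx⟩ := mem_range_of_exists_le_of_exists_ge (c := min (θ b) (c + π)) hθ
      ⟨a, le_min (by linarith) (by linarith)⟩ ⟨b, min_le_left _ _⟩
    have h₁ : c + π / 2 < θ x := hx ▸ lt_min h (by linarith)
    have h₂ : θ x ≤ c + π := hx ▸ min_le_right _ _
    exact (hcos x).not_gt (cos_neg_of_pi_div_two_lt_of_lt (by linarith) (by linarith))
  have hlow : c - π / 2 ≤ θ b := by
    by_contra! h
    obtain ⟨x, hx⟩ := mem_range_of_exists_le_of_exists_ge (c := max (θ b) (c - π)) hθ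
      ⟨b, le_max_left _ _⟩ ⟨a, max_le (by linarith) (by linarith)⟩
    have h₁ : θ x < c - π / 2 := hx ▸ max_lt h (by linarith)
    have h₂ : c - π ≤ θ x := hx ▸ le_max_right _ _
    refine (hcos x).not_gt ?_
    rw [← cos_neg]
    exact cos_neg_of_pi_div_two_lt_of_lt (by linarith) (by linarith)
  refine ⟨?_, hup⟩
  by_contra! h
  exact hsin.not_gt (sin_neg_of_neg_of_neg_pi_lt (by linarith) (by linarith))

/-- A continuous complex function on the plane whose values on the lines `t = 0`, `s = 1`, `t = 1`,
`s = 0` lie in the left, lower, right and upper closed half-planes respectively has a zero. -/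
theorem exists_eq_zero_of_re_im_sign {F : ℝ × ℝ → ℂ} (hF : Continuous F)
    (hwest : ∀ s, (F (0, s)).re ≤ 0) (heast : ∀ s, 0 ≤ (F (1, s)).re)
    (hsouth : ∀ t, 0 ≤ (F (t, 0)).im) (hnorth : ∀ t, (F (t, 1)).im ≤ 0) : ∃ p, F p = 0 := by
  by_contra! hne
  obtain ⟨L, ⟨hL₀, hL⟩, -⟩ := Complex.isCoveringMapOn_exp.existsUnique_continuousMap_lifts
    ⟨F, hF⟩ (a₀ := (0, 0)) (e₀ := Complex.log (F (0, 0))) (Complex.exp_log (hne _)) hne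
  replace hL (p : ℝ × ℝ) : Complex.exp (L p) = F p := congrFun hL p
  have hre (p : ℝ × ℝ) : (F p).re = Real.exp (L p).re * Real.cos (L p).im := by
    rw [← hL, Complex.exp_re]
  have him (p : ℝ × ℝ) : (F p).im = Real.exp (L p).re * Real.sin (L p).im := by
    rw [← hL, Complex.exp_im]
  have hw (s : ℝ) : Real.cos (L (0, s)).im ≤ 0 :=
    nonpos_of_mul_nonpos_right (hre _ ▸ hwest s) (Real.exp_pos _)
  have he (s : ℝ) : 0 ≤ Real.cos (L (1, s)).im :=
    nonneg_of_mul_nonneg_right (hre _ ▸ heast s) (Real.exp_pos _)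
  have hs (t : ℝ) : 0 ≤ Real.sin (L (t, 0)).im :=
    nonneg_of_mul_nonneg_right (him _ ▸ hsouth t) (Real.exp_pos _)
  have hn (t : ℝ) : Real.sin (L (t, 1)).im ≤ 0 :=
    nonpos_of_mul_nonpos_right (him _ ▸ hnorth t) (Real.exp_pos _)
  have hπ := Real.pi_pos
  -- The argument at the corner `(0, 0)`, then after each side of the boundary in turn.
  have h₀₀ : (L (0, 0)).im ∈ Set.Icc (Real.pi - Real.pi / 2) (Real.pi + Real.pi / 2) := by
    have hlow : 0 ≤ (L (0, 0)).im := by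
      rw [hL₀, Complex.log_im, Complex.arg_nonneg_iff]
      exact hsouth 0
    have hup : (L (0, 0)).im ≤ Real.pi := by
      rw [hL₀, Complex.log_im]
      exact Complex.arg_le_pi _
    refine ⟨?_, by linarith⟩
    by_contra! h
    exact (hw 0).not_gt (Real.cos_pos_of_mem_Ioo ⟨by linarith, by linarith⟩)
  have h₀₁ := mem_Icc_of_cos_nonneg_of_sin_nonneg (θ := fun s ↦ (L (0, s)).im) (b := 1)
    (by fun_prop) (fun s ↦ by simpa using hw s) h₀₀ (by simpa using hn 0)
  have h₁₁ := mem_Icc_of_cos_nonneg_of_sin_nonneg (θ := fun t ↦ (L (t, 1)).im) (a := 0) (b := 1)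
    (c := Real.pi + Real.pi / 2) (by fun_prop)
    (fun t ↦ by simpa [← sub_sub, Real.cos_sub_pi_div_two] using hn t)
    ⟨by linarith [h₀₁.1], by linarith [h₀₁.2]⟩
    (by simpa [← sub_sub, Real.sin_sub_pi_div_two] using he 1)
  have h₁₀ := mem_Icc_of_cos_nonneg_of_sin_nonneg (θ := fun s ↦ (L (1, s)).im) (a := 1) (b := 0)
    (c := 2 * Real.pi) (by fun_prop) (fun s ↦ by simpa using he s)
    ⟨by linarith [h₁₁.1], by linarith [h₁₁.2]⟩ (by simpa using hs 1)
  have h₀₀' := mem_Icc_of_cos_nonneg_of_sin_nonneg (θ := fun t ↦ (L (t, 0)).im) (a := 1) (b := 0)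
    (c := 2 * Real.pi + Real.pi / 2) (by fun_prop)
    (fun t ↦ by simpa [← sub_sub, Real.cos_sub_pi_div_two] using hs t)
    ⟨by linarith [h₁₀.1], by linarith [h₁₀.2]⟩
    (by simpa [← sub_sub, Real.sin_sub_pi_div_two] using hw 0)
  linarith [h₀₀.2, h₀₀'.1]

/-- a path joining the west and east sides of the unit square and a path
joining its south and north sides must intersect. -/
theorem stmt_13 (f g : ℝ → ℝ × ℝ)
    (hf : ContinuousOn f (Set.Icc 0 1)) (hg : ContinuousOn g (Set.Icc 0 1))
    (hfmem : ∀ t ∈ Set.Icc (0 : ℝ) 1, f t ∈ Set.Icc (0 : ℝ) 1 ×ˢ Set.Icc (0 : ℝ) 1)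
    (hgmem : ∀ t ∈ Set.Icc (0 : ℝ) 1, g t ∈ Set.Icc (0 : ℝ) 1 ×ˢ Set.Icc (0 : ℝ) 1)
    (hf0 : (f 0).1 = 0) (hf1 : (f 1).1 = 1)
    (hg0 : (g 0).2 = 0) (hg1 : (g 1).2 = 1) :
    ∃ t ∈ Set.Icc (0 : ℝ) 1, ∃ s ∈ Set.Icc (0 : ℝ) 1, f t = g s := by
  let c (x : ℝ) : ℝ := Set.projIcc 0 1 zero_le_one x
  have hc (x : ℝ) : c x ∈ Set.Icc (0 : ℝ) 1 := (Set.projIcc 0 1 zero_le_one x).2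
  have hc0 : c 0 = 0 := by simp [c]
  have hc1 : c 1 = 1 := by simp [c]
  have hccont : Continuous c := continuous_subtype_val.comp continuous_projIcc
  have hfc : Continuous fun x ↦ f (c x) := hf.comp_continuous hccont hc
  have hgc : Continuous fun x ↦ g (c x) := hg.comp_continuous hccont hc
  let F (p : ℝ × ℝ) : ℂ := Complex.equivRealProdCLM.symm (f (c p.1) - g (c p.2))
  have hF : Continuous F := Complex.equivRealProdCLM.symm.continuous.comp
    ((hfc.comp continuous_fst).sub (hgc.comp continuous_snd))
  have hre (t s : ℝ) : (F (t, s)).re = (f (c t)).1 - (g (c s)).1 := by simp [F]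
  have him (t s : ℝ) : (F (t, s)).im = (f (c t)).2 - (g (c s)).2 := by simp [F]
  obtain ⟨p, hp⟩ := exists_eq_zero_of_re_im_sign hF
    (fun s ↦ by rw [hre, hc0, hf0]; linarith [(hgmem _ (hc s)).1.1])
    (fun s ↦ by rw [hre, hc1, hf1]; linarith [(hgmem _ (hc s)).1.2])
    (fun t ↦ by rw [him, hc0, hg0]; linarith [(hfmem _ (hc t)).2.1])
    (fun t ↦ by rw [him, hc1, hg1]; linarith [(hfmem _ (hc t)).2.2])
  exact ⟨c p.1, hc _, c p.2, hc _, sub_eq_zero.mp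
    (Complex.equivRealProdCLM.symm.map_eq_zero_iff.mp hp)⟩
end

section
/- Let u⁺ ⊆ ℝ² be the closed unit disk centered at the origin. The neighborhood N⁺_{u⁺, 7.25} = {(x,y) ∈ ℤ² : x² + y² ≤ 7.25²} ∖ {(0,0)} can perform crossing: for some n there exist vectors n̄,ē,s̄,w̄ ∈ E_n and a crossing configuration of size n×n with these vectors for the sandpile dynamics with this neighborhood. -/
open Finset

/-- The configuration obtained from `c` when every vertex of `R` has fired exactly once. -/
def fireOnce (N : Finset Vertex) (c : Config) (R : Finset Vertex) : Config := fun v =>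
  c v + (R.filter (fun u => v - u ∈ N)).card - if v ∈ R then N.card else 0

lemma card_filter_sub_mem_comm (N A : Finset Vertex) (v : Vertex) :
    (N.filter (fun d => v - d ∈ A)).card = (A.filter (fun u => v - u ∈ N)).card := by
  refine Finset.card_bij (fun d _ => v - d) ?_ ?_ ?_
  · intro d hd
    simpa [and_comm] using hd
  · intro d _ d' _ h
    simpa using h
  · intro u hu
    exact ⟨v - u, by simpa [and_comm] using hu, by simp⟩

lemma sandF_fireOnce {N : Finset Vertex} {c : Config} {R A : Finset Vertex}
    (hR : ∀ v ∈ R, N.card ≤ c v + (R.filter (fun u => v - u ∈ N)).card)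
    (hA : ∀ v, N.card ≤ fireOnce N c R v ↔ v ∈ A) (hRA : Disjoint R A) :
    sandF N (fireOnce N c R) = fireOnce N c (R ∪ A) := by
  funext v
  have hcard : ((R ∪ A).filter (fun u => v - u ∈ N)).card
      = (R.filter (fun u => v - u ∈ N)).card + (A.filter (fun u => v - u ∈ N)).card := by
    rw [Finset.filter_union, Finset.card_union_of_disjoint (Finset.disjoint_filter_filter hRA)]
  have hfire := hA v
  have hRv := hR v
  simp only [sandF, hA, card_filter_sub_mem_comm]
  simp only [fireOnce, Finset.mem_union, hcard] at hfire ⊢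
  by_cases h₁ : v ∈ R
  · have h₂ : v ∉ A := Finset.disjoint_left.mp hRA h₁
    have := hRv h₁
    simp only [h₁, h₂, if_true, if_false, true_or]
    omega
  · by_cases h₂ : v ∈ A
    · have := hfire.mpr h₂
      simp only [h₁, h₂, if_true, if_false, or_true] at this ⊢
      omega
    · simp only [h₁, h₂, if_false, or_self]
      omega

/-- The vertices scheduled before time `t` by `L`. -/
def firedBefore (L : List (Finset Vertex)) (t : ℕ) : Finset Vertex :=
  (L.take t).foldl (· ∪ ·) ∅

lemma firedBefore_succ (L : List (Finset Vertex)) (t : ℕ) :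
    firedBefore L (t + 1) = firedBefore L t ∪ L.getD t ∅ := by
  simp only [firedBefore, List.take_add_one, List.foldl_append, List.getD_eq_getElem?_getD]
  cases L[t]? <;> simp

lemma firedBefore_of_length_le {L : List (Finset Vertex)} {t : ℕ} (h : L.length ≤ t) :
    firedBefore L t = firedBefore L L.length := by
  simp [firedBefore, List.take_of_length_le h]

lemma firedBefore_mono (L : List (Finset Vertex)) : Monotone (firedBefore L) :=
  monotone_nat_of_le_succ fun t => by
    rw [firedBefore_succ]
    exact Finset.subset_union_left

/-- If the schedule `L` lists exactly the unstable vertices of each intermediate configuration,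
then it describes the parallel dynamics. -/
lemma iterate_sandF_eq_fireOnce {N : Finset Vertex} {c : Config} {L : List (Finset Vertex)}
    (hL : ∀ t v, N.card ≤ fireOnce N c (firedBefore L t) v ↔ v ∈ L.getD t ∅)
    (hdisj : ∀ t, Disjoint (firedBefore L t) (L.getD t ∅)) (t : ℕ) :
    (sandF N)^[t] c = fireOnce N c (firedBefore L t) := by
  suffices h : (sandF N)^[t] c = fireOnce N c (firedBefore L t) ∧ ∀ v ∈ firedBefore L t,
      N.card ≤ c v + ((firedBefore L t).filter (fun u => v - u ∈ N)).card from h.1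
  induction t with
  | zero =>
    constructor
    · funext v
      simp [fireOnce, firedBefore]
    · simp [firedBefore]
  | succ t ih =>
    rw [Function.iterate_succ_apply', ih.1, firedBefore_succ]
    refine ⟨sandF_fireOnce ih.2 (hL t) (hdisj t), fun v hv => ?_⟩
    have hle : ((firedBefore L t).filter (fun u => v - u ∈ N)).card
        ≤ ((firedBefore L t ∪ L.getD t ∅).filter (fun u => v - u ∈ N)).card :=
      Finset.card_le_card (Finset.filter_subset_filter _ Finset.subset_union_left)
    rcases Finset.mem_union.mp hv with hv | hv
    · exact (ih.2 v hv).trans (by omega)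
    · have := (hL t v).mpr hv
      simp only [fireOnce] at this
      omega

/-- It suffices to check a schedule up to its length and on the support of the configuration. -/
lemma act_iterate_sandF_of_schedule {N S : Finset Vertex} {c : Config}
    {L : List (Finset Vertex)} (hS : ∀ v, v ∉ S → c v = 0)
    (hLS : ∀ A ∈ L, A ⊆ S) (hsmall : (firedBefore L L.length).card < N.card)
    (hL : ∀ t ≤ L.length, ∀ v ∈ S,
      (N.card ≤ fireOnce N c (firedBefore L t) v ↔ v ∈ L.getD t ∅))
    (hdisj : ∀ t < L.length, Disjoint (firedBefore L t) (L.getD t ∅)) (t : ℕ) :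
    Act N ((sandF N)^[t] c) = L.getD t ∅ := by
  have hsub : ∀ t, L.getD t ∅ ⊆ S := fun t => by
    rcases lt_or_ge t L.length with h | h
    · rw [List.getD_eq_getElem _ _ h]
      exact hLS _ (List.getElem_mem h)
    · rw [List.getD_eq_default _ _ h]
      simp
  have hall : ∀ t v, N.card ≤ fireOnce N c (firedBefore L t) v ↔ v ∈ L.getD t ∅ := by
    intro t v
    by_cases hv : v ∈ S
    · rcases le_total t L.length with h | h
      · exact hL t h v hv
      · have := hL L.length le_rfl v hv
        rw [firedBefore_of_length_le h, this, List.getD_eq_default _ _ h,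
          List.getD_eq_default _ _ le_rfl]
    · refine iff_of_false ?_ fun h => hv (hsub t h)
      have h₁ : (firedBefore L t).card ≤ (firedBefore L L.length).card := by
        rcases le_total t L.length with h | h
        · exact Finset.card_le_card (firedBefore_mono L h)
        · rw [firedBefore_of_length_le h]
      have h₂ := Finset.card_filter_le (firedBefore L t) (fun u => v - u ∈ N)
      simp only [fireOnce, hS v hv]
      omega
  have hdisj' : ∀ t, Disjoint (firedBefore L t) (L.getD t ∅) := fun t => by
    rcases lt_or_ge t L.length with h | h
    · exact hdisj t h
    · rw [List.getD_eq_default _ _ h]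
      simp
  rw [iterate_sandF_eq_fireOnce hall hdisj']
  ext v
  exact hall t v

/-- The nonzero integer points `(x, y)` with `x² + y² ≤ 52`. -/
noncomputable def diskNbhd : Finset Vertex :=
  (Finset.Icc (-7 : ℤ) 7 ×ˢ Finset.Icc (-7 : ℤ) 7).filter
    (fun v => v.1 * v.1 + v.2 * v.2 ≤ 52 ∧ v ≠ (0, 0))

lemma mem_diskNbhd (v : Vertex) :
    v ∈ diskNbhd ↔ v.1 * v.1 + v.2 * v.2 ≤ 52 ∧ v ≠ (0, 0) := by
  simp only [diskNbhd, Finset.mem_filter, Finset.mem_product, Finset.mem_Icc,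
    and_iff_right_iff_imp, and_imp]
  intro h _
  refine ⟨⟨?_, ?_⟩, ?_, ?_⟩ <;> nlinarith [mul_self_nonneg v.1, mul_self_nonneg v.2]

lemma card_diskNbhd : diskNbhd.card = 168 := by
  decide +kernel

/-- The vertices of the crossing configuration needing `k` grains to fire, for `k = 1, 2, 3, 4`. -/
def crossLevel : ℕ → Finset Vertex
  | 1 => {(0, 14), (1, 14), (1, 15), (2, 14), (2, 15), (21, 14),
          (10, 0), (10, 7), (11, 7), (10, 21)}
  | 2 => {(14, 14), (9, 7)}
  | 3 => {(7, 14), (9, 8)}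
  | 4 => {(8, 14), (10, 14)}
  | _ => ∅

/-- The vertices carrying grains in the crossing configuration. -/
def crossSupport : Finset Vertex :=
  crossLevel 1 ∪ crossLevel 2 ∪ crossLevel 3 ∪ crossLevel 4

/-- A crossing configuration of size `22 × 22` for `diskNbhd`. -/
def crossConfig : Config := fun v =>
  if v ∈ crossLevel 1 then 167 else if v ∈ crossLevel 2 then 166
  else if v ∈ crossLevel 3 then 165 else if v ∈ crossLevel 4 then 164 else 0

/-- The `j`-th standard basis vector. -/
def basisVec (j : ℕ) : ℕ → ℕ := fun i => if i = j then 1 else 0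

lemma isUnitVec_basisVec {n j : ℕ} (h : j < n) : IsUnitVec n (basisVec j) := by
  refine ⟨fun i => ?_, fun i hi => ?_, j, ?_, fun i hi => ?_⟩
  · unfold basisVec
    split <;> simp
  · exact if_neg (by omega)
  · simp [basisVec]
  · by_contra hne
    simp [basisVec, hne] at hi

/-- The successive sets of unstable vertices after a grain is added on the west border. -/
def westSchedule : List (Finset Vertex) :=
  [{(0, 14)}, {(1, 14), (1, 15), (2, 14), (2, 15)}, {(7, 14), (8, 14)}, {(14, 14)}, {(21, 14)}]

/-- The successive sets of unstable vertices after a grain is added on the north border. -/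
def northSchedule : List (Finset Vertex) :=
  [{(10, 0)}, {(10, 7), (11, 7)}, {(9, 7)}, {(9, 8)}, {(10, 14)}, {(10, 21)}]

lemma crossConfig_eq_zero {v : Vertex} (hv : v ∉ crossSupport) : crossConfig v = 0 := by
  simp only [crossSupport, Finset.mem_union, not_or] at hv
  simp [crossConfig, hv]

lemma confW_eq_zero {v : Vertex} (hv : v ∉ crossSupport) : confW 22 (basisVec 14) v = 0 := by
  by_contra h
  simp only [confW, basisVec, ite_eq_right_iff, Classical.not_imp] at h
  have : v = (0, 14) := Prod.ext (by omega) (by simp only; omega)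
  exact hv (this ▸ by decide)

lemma confN_eq_zero {v : Vertex} (hv : v ∉ crossSupport) : confN 22 (basisVec 10) v = 0 := by
  by_contra h
  simp only [confN, basisVec, ite_eq_right_iff, Classical.not_imp] at h
  have : v = (10, 0) := Prod.ext (by simp only; omega) (by omega)
  exact hv (this ▸ by decide)

lemma act_west (t : ℕ) :
    Act diskNbhd ((sandF diskNbhd)^[t] (crossConfig + confW 22 (basisVec 14)))
      = westSchedule.getD t ∅ := by
  apply act_iterate_sandF_of_schedule (S := crossSupport)
  · intro v hv
    simp [crossConfig_eq_zero hv, confW_eq_zero hv]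
  · decide
  · rw [card_diskNbhd]
    decide
  · simp only [fireOnce, card_diskNbhd, mem_diskNbhd]
    decide +kernel
  · decide

lemma act_north (t : ℕ) :
    Act diskNbhd ((sandF diskNbhd)^[t] (crossConfig + confN 22 (basisVec 10)))
      = northSchedule.getD t ∅ := by
  apply act_iterate_sandF_of_schedule (S := crossSupport)
  · intro v hv
    simp [crossConfig_eq_zero hv, confN_eq_zero hv]
  · decide
  · rw [card_diskNbhd]
    decide
  · simp only [fireOnce, card_diskNbhd, mem_diskNbhd]
    decide +kernel
  · decide

lemma exists_mem_of_mem_getD {L : List (Finset Vertex)} {t : ℕ} {v : Vertex}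
    (h : v ∈ L.getD t ∅) : ∃ A ∈ L, v ∈ A := by
  rcases lt_or_ge t L.length with ht | ht
  · rw [List.getD_eq_getElem _ _ ht] at h
    exact ⟨_, List.getElem_mem ht, h⟩
  · rw [List.getD_eq_default _ _ ht] at h
    simp at h

lemma crossingConfig_crossConfig :
    CrossingConfig diskNbhd 22 crossConfig (basisVec 10) (basisVec 14) (basisVec 10)
      (basisVec 14) := by
  refine ⟨isUnitVec_basisVec (by norm_num), isUnitVec_basisVec (by norm_num),
    isUnitVec_basisVec (by norm_num), isUnitVec_basisVec (by norm_num), ?_, ?_, ⟨4, ?_⟩, ?_,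
    ⟨5, ?_⟩, ?_⟩
  · intro v
    rw [card_diskNbhd, crossConfig]
    split_ifs <;> norm_num
  · intro v hv
    refine crossConfig_eq_zero fun h => hv ?_
    revert v
    have : ∀ v ∈ crossSupport, 0 ≤ v.1 ∧ v.1 < ((22 : ℕ) : ℤ) ∧
        0 ≤ v.2 ∧ v.2 < ((22 : ℕ) : ℤ) := by
      decide
    exact fun v _ h => this v h
  · rw [act_west]
    ext ⟨x, y⟩
    simp [westSchedule, confE, basisVec]
    split_ifs <;> simp only [iff_false, iff_true] <;> omega
  · intro t v hv
    rw [act_west] at hv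
    obtain ⟨A, hA, hv⟩ := exists_mem_of_mem_getD (Finset.mem_coe.mp hv)
    have : ∀ A ∈ westSchedule, ∀ v ∈ A, v.2 ≠ ((22 : ℕ) : ℤ) - 1 := by decide
    exact this A hA v hv
  · rw [act_north]
    ext ⟨x, y⟩
    simp [northSchedule, confS, basisVec]
    split_ifs <;> simp only [iff_false, iff_true] <;> omega
  · intro t v hv
    rw [act_north] at hv
    obtain ⟨A, hA, hv⟩ := exists_mem_of_mem_getD (Finset.mem_coe.mp hv)
    have : ∀ A ∈ northSchedule, ∀ v ∈ A, v.1 ≠ ((22 : ℕ) : ℤ) - 1 := by decide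
    exact this A hA v hv

/-- the neighborhood of the closed unit disk with scaling ratio `7.25`,
i.e. `{(x,y) ∈ ℤ² : x² + y² ≤ 7.25²} ∖ {(0,0)}`, can perform crossing. -/
theorem stmt_15 (N : Finset Vertex)
    (hN : (↑N : Set Vertex) =
      {v : Vertex | ((v.1 : ℝ)) ^ 2 + ((v.2 : ℝ)) ^ 2 ≤ (7.25 : ℝ) ^ 2} \
        {((0 : ℤ), (0 : ℤ))}) :
    CanCross N := by
  obtain rfl : N = diskNbhd := by
    ext v
    rw [mem_diskNbhd, ← Finset.mem_coe, hN, Set.mem_sdiff, Set.mem_ofPred_eq,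
      Set.mem_singleton_iff]
    refine and_congr_left fun _ => ⟨fun h => ?_, fun h => ?_⟩
    · have : ((v.1 * v.1 + v.2 * v.2 : ℤ) : ℝ) < (53 : ℤ) := by
        push_cast
        nlinarith
      have := Int.cast_lt.mp this
      omega
    · have : ((v.1 * v.1 + v.2 * v.2 : ℤ) : ℝ) ≤ (52 : ℤ) := Int.cast_le.mpr h
      push_cast at this
      nlinarith
  exact ⟨22, crossConfig, _, _, _, _, crossingConfig_crossConfig⟩
end
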